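/- Strong small-set expansion theorem (inequalities): for every n ≥ 1, α ∈ [0,α_max], and β ∈ [0,β_max], one has Θ̲^{(n)}(α,β) ≥ Θ̲(α,β); and Θ̄^{(n)}(α,β) ≤ Θ̄(α,β) if α > 0 and β > 0, Θ̄^{(n)}(α,0) ≤ α, and Θ̄^{(n)}(0,β) ≤ β. -/

import Mathlib

open MeasureTheory ProbabilityTheory Set Filter
open scoped ENNReal NNReal BigOperators Classical Topology

noncomputable section

namespace BL

variable {X : Type*} {Y : Type*} [MeasurableSpace X] [MeasurableSpace Y]

/-! ### Extended logarithm, exponential, and division conventions -/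

/-- Extended logarithm `ℝ≥0∞ → EReal`, with `log 0 = ⊥` and `log ⊤ = ⊤`. -/
def elog (x : ℝ≥0∞) : EReal :=
  if x = 0 then ⊥ else if x = ⊤ then ⊤ else ((Real.log x.toReal : ℝ) : EReal)

/-- Extended exponential `EReal → ℝ≥0∞`, with `exp ⊥ = 0` and `exp ⊤ = ⊤`. -/
def eexp (x : EReal) : ℝ≥0∞ :=
  if x = ⊥ then 0 else if x = ⊤ then ⊤ else ENNReal.ofReal (Real.exp x.toReal)

/-- Division of an extended real by a real, with the conventions `a/0 = +∞` for `a > 0`,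
`a/0 = -∞` for `a < 0` and `0/0 = 0`. -/
def ediv (x : EReal) (c : ℝ) : EReal :=
  if c = 0 then (if 0 < x then ⊤ else if x < 0 then ⊥ else 0)
  else x * ((c⁻¹ : ℝ) : EReal)

/-- Division of a real by an extended real, with the convention `t/(±∞) = 0`. -/
def divE (t : ℝ) (r : EReal) : EReal :=
  if r = ⊤ ∨ r = ⊥ then 0 else ((t / r.toReal : ℝ) : EReal)

/-- Hölder conjugate, as an extended real (`conj 1 = ⊤`). -/
def conj (q : ℝ) : EReal := if q = 1 then ⊤ else ((q / (q - 1) : ℝ) : EReal)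

/-! ### Norms with a real (possibly negative) exponent -/

/-- `p`-"norm" of an `ℝ≥0∞`-valued function (`p` a nonzero real). -/
def enorm (P : Measure X) (F : X → ℝ≥0∞) (p : ℝ) : ℝ≥0∞ :=
  (∫⁻ x, F x ^ p ∂P) ^ (1 / p)

/-- `∞`-norm (essential supremum) of an `ℝ≥0∞`-valued function. -/
def enormInf (P : Measure X) (F : X → ℝ≥0∞) : ℝ≥0∞ := essSup F P

/-- `p`-"norm" of a nonnegative real-valued function. -/
def rnorm (P : Measure X) (f : X → ℝ) (p : ℝ) : ℝ≥0∞ :=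
  enorm P (fun x => ENNReal.ofReal (f x)) p

/-- `∞`-norm of a nonnegative real-valued function. -/
def rnormInf (P : Measure X) (f : X → ℝ) : ℝ≥0∞ :=
  enormInf P (fun x => ENNReal.ofReal (f x))

/-! ### Divergences -/

/-- Kullback--Leibler divergence, valued in `EReal` (equal to `⊤` when undefined). -/
def KL (Q P : Measure X) : EReal :=
  if Q ≪ P ∧ Integrable (fun x => Real.log (Q.rnDeriv P x).toReal) Q then
    ((∫ x, Real.log (Q.rnDeriv P x).toReal ∂Q : ℝ) : EReal)
  else ⊤

/-- Rényi divergence of order `s` (`s = 1` gives the KL divergence). -/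
def Renyi (s : ℝ) (Q P : Measure X) : EReal :=
  if s = 1 then KL Q P
  else (((s - 1)⁻¹ : ℝ) : EReal) *
    elog (∫⁻ x, Q.rnDeriv (Q + P) x ^ s * P.rnDeriv (Q + P) x ^ (1 - s) ∂(Q + P))

/-- First marginal of a measure on a product space. -/
def m1 (P : Measure (X × Y)) : Measure X := P.map Prod.fst

/-- Second marginal of a measure on a product space. -/
def m2 (P : Measure (X × Y)) : Measure Y := P.map Prod.snd

/-- Couplings of a pair of (probability) measures. -/
def couplings (μ : Measure X) (ν : Measure Y) : Set (Measure (X × Y)) :=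
  {π | IsProbabilityMeasure π ∧ π.map Prod.fst = μ ∧ π.map Prod.snd = ν}

/-- `𝔻(QX, QY ‖ P)` : minimum relative entropy over couplings. -/
def Dmin (QX : Measure X) (QY : Measure Y) (P : Measure (X × Y)) : EReal :=
  ⨅ (π : Measure (X × Y)) (_ : π ∈ couplings QX QY), KL π P

/-! ### The functions φ and their envelopes -/

/-- `φ̲(s,t)`. -/
def phiL (P : Measure (X × Y)) (s t : ℝ) : EReal :=
  ⨅ (QX : Measure X) (QY : Measure Y) (_ : IsProbabilityMeasure QX)
    (_ : IsProbabilityMeasure QY) (_ : QX ≪ m1 P) (_ : QY ≪ m2 P)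
    (_ : KL QX (m1 P) = (s : EReal)) (_ : KL QY (m2 P) = (t : EReal)),
    Dmin QX QY P

/-- `φ̄(s,t)`. -/
def phiU (P : Measure (X × Y)) (s t : ℝ) : EReal :=
  ⨆ (QX : Measure X) (QY : Measure Y) (_ : IsProbabilityMeasure QX)
    (_ : IsProbabilityMeasure QY) (_ : QX ≪ m1 P) (_ : QY ≪ m2 P)
    (_ : KL QX (m1 P) = (s : EReal)) (_ : KL QY (m2 P) = (t : EReal)),
    Dmin QX QY P

/-- Lower convex envelope on `[0,∞)²`, via convex combinations of (at most) 4 points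
(Carathéodory). -/
def lce2 (F : ℝ → ℝ → EReal) (a b : ℝ) : EReal :=
  ⨅ (q : Fin 4 → ℝ) (x : Fin 4 → ℝ × ℝ) (_ : ∀ i, 0 ≤ q i) (_ : ∑ i, q i = 1)
    (_ : ∀ i, 0 ≤ (x i).1 ∧ 0 ≤ (x i).2)
    (_ : ∑ i, q i * (x i).1 = a) (_ : ∑ i, q i * (x i).2 = b),
    ∑ i, (q i : EReal) * F (x i).1 (x i).2

/-- Upper concave envelope on `[0,∞)²`. -/
def uce2 (F : ℝ → ℝ → EReal) (a b : ℝ) : EReal :=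
  ⨆ (q : Fin 4 → ℝ) (x : Fin 4 → ℝ × ℝ) (_ : ∀ i, 0 ≤ q i) (_ : ∑ i, q i = 1)
    (_ : ∀ i, 0 ≤ (x i).1 ∧ 0 ≤ (x i).2)
    (_ : ∑ i, q i * (x i).1 = a) (_ : ∑ i, q i * (x i).2 = b),
    ∑ i, (q i : EReal) * F (x i).1 (x i).2

/-- Lower convex envelope on `[0,∞)`. -/
def lce1 (F : ℝ → EReal) (a : ℝ) : EReal :=
  ⨅ (q : Fin 3 → ℝ) (x : Fin 3 → ℝ) (_ : ∀ i, 0 ≤ q i) (_ : ∑ i, q i = 1)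
    (_ : ∀ i, 0 ≤ x i) (_ : ∑ i, q i * x i = a),
    ∑ i, (q i : EReal) * F (x i)

/-- Upper concave envelope on `[0,∞)`. -/
def uce1 (F : ℝ → EReal) (a : ℝ) : EReal :=
  ⨆ (q : Fin 3 → ℝ) (x : Fin 3 → ℝ) (_ : ∀ i, 0 ≤ q i) (_ : ∑ i, q i = 1)
    (_ : ∀ i, 0 ≤ x i) (_ : ∑ i, q i * x i = a),
    ∑ i, (q i : EReal) * F (x i)

/-- `Θ̲(α,β)`: increasing lower convex envelope of `φ̲`. -/
def ThetaL (P : Measure (X × Y)) (α β : ℝ) : EReal :=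
  ⨅ (s : ℝ) (t : ℝ) (_ : α ≤ s) (_ : β ≤ t), lce2 (phiL P) s t

/-- `Θ̄(α,β)`: increasing upper concave envelope of `φ̄`. -/
def ThetaU (P : Measure (X × Y)) (α β : ℝ) : EReal :=
  ⨆ (s : ℝ) (t : ℝ) (_ : 0 ≤ s) (_ : s ≤ α) (_ : 0 ≤ t) (_ : t ≤ β), uce2 (phiU P) s t

/-- `φ_r(s) = inf_{t ≥ 0} (φ̲(s,t) - t/r)` for `r ∈ [1,∞]` (`r` an extended real). -/
def phiRinf (P : Measure (X × Y)) (r : EReal) (s : ℝ) : EReal :=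
  ⨅ (t : ℝ) (_ : 0 ≤ t), phiL P s t - divE t r

/-- `Θ_r(α)` for `r ∈ [1,∞]`. -/
def ThetaGe1 (P : Measure (X × Y)) (r : EReal) (α : ℝ) : EReal :=
  ⨅ (s : ℝ) (_ : α ≤ s), lce1 (phiRinf P r) s

/-- `φ_r(s) = sup_{t ≥ 0} (φ̄(s,t) - t/r)` for `r ∈ (0,1)`. -/
def phiSupR (P : Measure (X × Y)) (r : ℝ) (s : ℝ) : EReal :=
  ⨆ (t : ℝ) (_ : 0 ≤ t), phiU P s t - divE t (r : EReal)

/-- `φ_r(s)` for `r < 0`. -/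
def phiNeg (P : Measure (X × Y)) (r : ℝ) (s : ℝ) : EReal :=
  ⨆ (QX : Measure X) (_ : IsProbabilityMeasure QX) (_ : QX ≪ m1 P)
    (_ : KL QX (m1 P) = (s : EReal)),
    ⨅ (QY : Measure Y) (_ : IsProbabilityMeasure QY) (_ : QY ≪ m2 P),
      Dmin QX QY P - ediv (KL QY (m2 P)) r

/-- `φ_r(s)` for `r < 1`, `r ≠ 0`. -/
def phiLT1 (P : Measure (X × Y)) (r : ℝ) (s : ℝ) : EReal :=
  if 0 < r then phiSupR P r s else phiNeg P r s

/-- `Θ_r(α)` for `r < 1`, `r ≠ 0`. -/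
def ThetaLT1 (P : Measure (X × Y)) (r : ℝ) (α : ℝ) : EReal :=
  ⨆ (s : ℝ) (_ : 0 ≤ s) (_ : s ≤ α), uce1 (phiLT1 P r) s

/-- `α_max = sup {-log μ(A) : μ(A) > 0}`. -/
def alphaMax (μ : Measure X) : EReal :=
  ⨆ (A : Set X) (_ : MeasurableSet A) (_ : μ A ≠ 0), -elog (μ A)

/-! ### Entropies -/

/-- `Ent_{p,p}(f)`. -/
def entPP (P : Measure X) (f : X → ℝ) (p : ℝ) : EReal :=
  (((∫ x, f x ^ p * Real.log (f x ^ p) ∂P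
      - (∫ x, f x ^ p ∂P) * Real.log (∫ x, f x ^ p ∂P))
     / (∫ x, f x ^ p ∂P) : ℝ) : EReal)

/-- `Ent_{p,p̂}(f)` for a nonzero real `p` and a real `p̂`. -/
def ent (P : Measure X) (f : X → ℝ) (p phat : ℝ) : EReal :=
  if phat = p then entPP P f p
  else if phat = 0 then -elog (P {x | 0 < f x})
  else ((p * phat / (p - phat) : ℝ) : EReal) * (elog (rnorm P f p) - elog (rnorm P f phat))

/-- `Ent_{p,∞}(f)` for a nonzero real `p`. -/
def entTop (P : Measure X) (f : X → ℝ) (p : ℝ) : EReal :=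
  if rnormInf P f = ⊤ then (if 0 < p then ⊤ else ⊥)
  else ((-p : ℝ) : EReal) * (elog (rnorm P f p) - elog (rnormInf P f))

/-- `Ent_{p,p*}(f)` for a nonzero real `p` and `p* ∈ [0,∞]`. -/
def entE (P : Measure X) (f : X → ℝ) (p : ℝ) (ps : ℝ≥0∞) : EReal :=
  if ps = ⊤ then entTop P f p else ent P f p ps.toReal

/-- Admissible functions: measurable, nonnegative, not a.e. zero. -/
def Adm (P : Measure X) (f : X → ℝ) : Prop :=
  Measurable f ∧ (∀ x, 0 ≤ f x) ∧ ¬ f =ᵐ[P] (fun _ => 0)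

/-! ### Products -/

/-- `n`-fold product measure. -/
def piM (n : ℕ) (P : Measure X) : Measure (Fin n → X) := Measure.pi fun _ => P

def fstv {n : ℕ} (z : Fin n → X × Y) : Fin n → X := fun i => (z i).1
def sndv {n : ℕ} (z : Fin n → X × Y) : Fin n → Y := fun i => (z i).2

/-- `⟨f,g⟩ = ∫ f(xⁿ) g(yⁿ) dP^{⊗n}`. -/
def innerFG (P : Measure (X × Y)) (n : ℕ) (f : (Fin n → X) → ℝ) (g : (Fin n → Y) → ℝ) :
    ℝ≥0∞ :=
  ∫⁻ z, ENNReal.ofReal (f (fstv z)) * ENNReal.ofReal (g (sndv z)) ∂(piM n P)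

/-- The set `A × B` viewed inside `(X × Y)ⁿ`. -/
def prodSet {n : ℕ} (A : Set (Fin n → X)) (B : Set (Fin n → Y)) : Set (Fin n → X × Y) :=
  {z | fstv z ∈ A ∧ sndv z ∈ B}

/-! ### Kernels -/

/-- Product of kernel measures `⊗ᵢ κ(yᵢ)`. -/
def kpi {n : ℕ} (κ : Kernel Y X) (y : Fin n → Y) : Measure (Fin n → X) :=
  Measure.pi fun i => κ (y i)

/-- The conditional expectation operator `P_{X|Y}^{⊗n}(f)`. -/
def condOp {n : ℕ} (κ : Kernel Y X) (f : (Fin n → X) → ℝ) : (Fin n → Y) → ℝ≥0∞ :=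
  fun y => ∫⁻ x, ENNReal.ofReal (f x) ∂(kpi κ y)

/-- `κ` is a regular conditional probability of the first coordinate given the second. -/
def IsCondKernel (P : Measure (X × Y)) (κ : Kernel Y X) : Prop :=
  ∀ (A : Set X) (B : Set Y), MeasurableSet A → MeasurableSet B →
    P (A ×ˢ B) = ∫⁻ y in B, κ y A ∂(m2 P)

/-! ### η and `Λ̲*` -/

/-- The function `η_{p,p̂}(α,s)`. -/
def eta (p phat α : ℝ) (s : EReal) : EReal :=
  if 0 ≤ p ∧ 0 ≤ phat then max (ediv ((α : EReal) - s) p) (ediv ((α : EReal) - s) phat)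
  else if 0 < p ∧ phat < 0 then ediv ((α : EReal) - s) p
  else if 0 < phat ∧ p < 0 then ediv ((α : EReal) - s) phat
  else ⊥

/-- `Λ̲*_{p,q,p̂,q̂}(α,β)` (time sharing variable of size ≤ 4). -/
def LamLstar (P : Measure (X × Y)) (p q phat qhat α β : ℝ) : EReal :=
  ⨅ (w : Fin 4 → ℝ) (QX : Fin 4 → Measure X) (QY : Fin 4 → Measure Y)
    (_ : ∀ i, 0 ≤ w i) (_ : ∑ i, w i = 1)
    (_ : ∀ i, IsProbabilityMeasure (QX i)) (_ : ∀ i, QX i ≪ m1 P)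
    (_ : ∀ i, IsProbabilityMeasure (QY i)) (_ : ∀ i, QY i ≪ m2 P),
    (∑ i, (w i : EReal) * Dmin (QX i) (QY i) P)
      + eta p phat α (∑ i, (w i : EReal) * KL (QX i) (m1 P))
      + eta q qhat β (∑ i, (w i : EReal) * KL (QY i) (m2 P))

/-! ### Sub/supergradients (slopes in `[0,∞]`) -/

def IsSubgrad2 (F : ℝ → ℝ → EReal) (α β : ℝ) (u v : ℝ≥0∞) : Prop :=
  ∀ s t : ℝ, 0 ≤ s → 0 ≤ t →
    F α β + (u : EReal) * ((s - α : ℝ) : EReal) + (v : EReal) * ((t - β : ℝ) : EReal) ≤ F s t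

def IsSupergrad2 (F : ℝ → ℝ → EReal) (α β : ℝ) (u v : ℝ≥0∞) : Prop :=
  ∀ s t : ℝ, 0 ≤ s → 0 ≤ t →
    F s t ≤ F α β + (u : EReal) * ((s - α : ℝ) : EReal) + (v : EReal) * ((t - β : ℝ) : EReal)

def IsSubgrad1 (F : ℝ → EReal) (α : ℝ) (u : ℝ≥0∞) : Prop :=
  ∀ s : ℝ, 0 ≤ s → F α + (u : EReal) * ((s - α : ℝ) : EReal) ≤ F s

def IsSupergrad1 (F : ℝ → EReal) (α : ℝ) (u : ℝ≥0∞) : Prop :=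
  ∀ s : ℝ, 0 ≤ s → F s ≤ F α + (u : EReal) * ((s - α : ℝ) : EReal)

/-! ### The n-dimensional noise-stability exponents -/

/-- `Θ̲^{(n)}(α,β) = -(1/n) log sup {P^{⊗n}(A×B) : P_X^{⊗n}(A) ≤ e^{-nα}, P_Y^{⊗n}(B) ≤ e^{-nβ}}`. -/
def ThetaLn (P : Measure (X × Y)) (n : ℕ) (α β : ℝ) : EReal :=
  -((((n : ℝ)⁻¹ : ℝ) : EReal) *
    elog (⨆ (A : Set (Fin n → X)) (B : Set (Fin n → Y))
        (_ : MeasurableSet A) (_ : MeasurableSet B)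
        (_ : piM n (m1 P) A ≤ ENNReal.ofReal (Real.exp (-((n : ℝ) * α))))
        (_ : piM n (m2 P) B ≤ ENNReal.ofReal (Real.exp (-((n : ℝ) * β)))),
        piM n P (prodSet A B)))

/-- `Θ̄^{(n)}(α,β) = -(1/n) log inf {P^{⊗n}(A×B) : P_X^{⊗n}(A) ≥ e^{-nα}, P_Y^{⊗n}(B) ≥ e^{-nβ}}`. -/
def ThetaUn (P : Measure (X × Y)) (n : ℕ) (α β : ℝ) : EReal :=
  -((((n : ℝ)⁻¹ : ℝ) : EReal) *
    elog (⨅ (A : Set (Fin n → X)) (B : Set (Fin n → Y))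
        (_ : MeasurableSet A) (_ : MeasurableSet B)
        (_ : ENNReal.ofReal (Real.exp (-((n : ℝ) * α))) ≤ piM n (m1 P) A)
        (_ : ENNReal.ofReal (Real.exp (-((n : ℝ) * β))) ≤ piM n (m2 P) B),
        piM n P (prodSet A B)))

/-!
For the lower bound, let `Q` be `P^{⊗n}` conditioned on `A × B`, so that
`D(Q‖P^{⊗n}) = -log P^{⊗n}(A × B)`, while the data-processing inequality bounds the divergences of
the marginals of `Q` from below by `nα` and `nβ`. The triple formed by the two marginal divergences
and the negated joint divergence *single-letterizes*: by the chain rule and the convexity of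
divergence, a triple attained on `Zⁿ` is dominated by `n` times a convex combination of
triples attained on `Z = 𝒳 × 𝒴`. By Carathéodory's theorem in `ℝ³`, four points suffice for that
convex combination, which is therefore controlled by the convex envelope of `φ̲`.

For the upper bound, a supergradient of the concave envelope of `φ̄` at `(α, β)` gives an affine
bound `𝔻(Q_X, Q_Y‖P) ≤ c + u D(Q_X‖P_X) + v D(Q_Y‖P_Y)`. By Gibbs' variational principle this
bound implies the reverse Brascamp–Lieb inequality
`∫ φ(x)^u ψ(y)^v dP ≥ e^{-c} (∫ φ dP_X)^u (∫ ψ dP_Y)^v`, which tensorizes by Fubini and, for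
indicator functions, is the required estimate of `P^{⊗n}(A × B)`.
-/

open InformationTheory

theorem exists_linearMap_ne_zero_forall_le_of_notMem {V : Type*} [NormedAddCommGroup V]
    [NormedSpace ℝ V] [FiniteDimensional ℝ V] {C : Set V} (hC : Convex ℝ C) (hne : C.Nonempty)
    {x : V} (hx : x ∉ C) : ∃ l : V →ₗ[ℝ] ℝ, l ≠ 0 ∧ ∀ c ∈ C, l c ≤ l x := by
  by_cases hint : (interior C).Nonempty
  · obtain ⟨f, hf, hfx⟩ := geometric_hahn_banach_of_nonempty_interior_point hC
      (notMem_subset interior_subset hx) hint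
    exact ⟨f, fun h ↦ hf (ContinuousLinearMap.coe_injective h), hfx⟩
  · have hspan : (affineSpan ℝ C).direction ≠ ⊤ := by
      rwa [hC.interior_nonempty_iff_affineSpan_eq_top,
        ← (affineSpan ℝ C).direction_eq_top_iff_of_nonempty
          ((affineSpan_nonempty ℝ).2 hne)] at hint
    obtain ⟨l, hl, hker⟩ := Submodule.exists_le_ker_of_lt_top _ hspan.lt_top
    obtain ⟨c₀, hc₀⟩ := hne
    have hconst : ∀ c ∈ C, l c = l c₀ := fun c hc ↦ by
      have hmem := hker (AffineSubspace.vsub_mem_direction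
        (subset_affineSpan ℝ C hc) (subset_affineSpan ℝ C hc₀))
      rwa [vsub_eq_sub, LinearMap.sub_mem_ker_iff] at hmem
    rcases le_total (l c₀) (l x) with h | h
    · exact ⟨l, hl, fun c hc ↦ (hconst c hc).trans_le h⟩
    · exact ⟨-l, neg_ne_zero.2 hl, fun c hc ↦ by simpa [hconst c hc] using h⟩

theorem ae_eq_zero_of_ae_nonpos_of_integral_eq_zero {Ω : Type*} [MeasurableSpace Ω]
    {μ : Measure Ω} {f : Ω → ℝ} (hf : Integrable f μ) (hle : ∀ᵐ ω ∂μ, f ω ≤ 0)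
    (hint : ∫ ω, f ω ∂μ = 0) : f =ᵐ[μ] 0 := by
  have h := (integral_eq_zero_iff_of_nonneg_ae (f := -f) (hle.mono fun ω h ↦ neg_nonneg.2 h)
    hf.neg).1 (by simp [integral_neg, hint])
  exact h.mono fun ω hω ↦ neg_eq_zero.1 hω

-- As `C` need not be closed, `Convex.integral_mem` does not apply. If the barycenter `b` is not in
-- `C`, a supporting functional `l` at `b` is a.e. constant along `f`, so `f - b` lies a.e. in the
-- proper subspace `ker l`, and we descend in dimension.
theorem integral_mem_of_convex {V : Type*} [NormedAddCommGroup V] [NormedSpace ℝ V]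
    [FiniteDimensional ℝ V] {Ω : Type*} [MeasurableSpace Ω] {μ : Measure Ω}
    [IsProbabilityMeasure μ] {C : Set V} (hC : Convex ℝ C) {f : Ω → V} (hf : Integrable f μ)
    (hfC : ∀ᵐ ω ∂μ, f ω ∈ C) : ∫ ω, f ω ∂μ ∈ C := by
  set b := ∫ ω, f ω ∂μ with hb
  by_contra hbC
  obtain ⟨ω₀, hω₀⟩ := hfC.exists
  obtain ⟨l, hl, hlC⟩ := exists_linearMap_ne_zero_forall_le_of_notMem hC ⟨_, hω₀⟩ hbC
  have hfb : Integrable (fun ω ↦ f ω - b) μ := hf.sub (integrable_const b)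
  have hfb_zero : ∫ ω, f ω - b ∂μ = 0 := by
    simp [integral_sub hf (integrable_const b), ← hb]
  have hker : ∀ᵐ ω ∂μ, f ω - b ∈ LinearMap.ker l := by
    have hint : ∫ ω, l.toContinuousLinearMap (f ω - b) ∂μ = 0 := by
      rw [ContinuousLinearMap.integral_comp_comm _ hfb, hfb_zero, map_zero]
    refine ae_eq_zero_of_ae_nonpos_of_integral_eq_zero
      (l.toContinuousLinearMap.integrable_comp hfb) (hfC.mono fun ω hω ↦ ?_) hint
    simpa using hlC _ hω
  obtain ⟨π, hπ⟩ := (LinearMap.ker l).subtype.exists_leftInverse_of_injective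
    (LinearMap.ker l).ker_subtype
  have hπ_val : ∀ w ∈ LinearMap.ker l, (π w : V) = w := fun w hw ↦
    congrArg Subtype.val (LinearMap.congr_fun hπ ⟨w, hw⟩)
  have hC' : Convex ℝ {w : LinearMap.ker l | b + w ∈ C} :=
    (hC.translate_preimage_right b).linear_preimage (LinearMap.ker l).subtype
  have hmem := integral_mem_of_convex hC' (π.toContinuousLinearMap.integrable_comp hfb) <| by
    filter_upwards [hker, hfC] with ω hω hωC
    change b + (π (f ω - b) : V) ∈ C
    rwa [hπ_val _ hω, add_sub_cancel]
  rw [ContinuousLinearMap.integral_comp_comm _ hfb, hfb_zero, map_zero] at hmem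
  exact hbC (by simpa using hmem)
termination_by Module.finrank ℝ V
decreasing_by exact Submodule.finrank_lt (LinearMap.ker_eq_top.not.2 hl)

theorem exists_fin_sum_smul_eq_of_mem_convexHull {V : Type*} [AddCommGroup V] [Module ℝ V]
    [FiniteDimensional ℝ V] {k : ℕ} (hk : Module.finrank ℝ V < k) {s : Set V} {x : V}
    (hx : x ∈ convexHull ℝ s) :
    ∃ (q : Fin k → ℝ) (p : Fin k → V),
      (∀ i, 0 ≤ q i) ∧ ∑ i, q i = 1 ∧ (∀ i, p i ∈ s) ∧ ∑ i, q i • p i = x := by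
  obtain ⟨x₀, hx₀⟩ : s.Nonempty := convexHull_nonempty_iff.1 ⟨x, hx⟩
  obtain ⟨ι, _, z, w, hz, hind, hw, hw_sum, hwz⟩ := eq_pos_convex_span_of_mem_convexHull hx
  have hcard : Fintype.card ι ≤ k := by
    have := hind.card_le_finrank_succ
    have := Submodule.finrank_le (vectorSpan ℝ (Set.range z))
    omega
  obtain ⟨e⟩ : Nonempty (ι ↪ Fin k) :=
    Function.Embedding.nonempty_of_card_le (by simpa using hcard)
  have hext : ∀ i ∉ Set.range e, Function.extend e w 0 i = 0 := fun i hi ↦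
    Function.extend_apply' _ _ _ hi
  refine ⟨Function.extend e w 0, Function.extend e z fun _ ↦ x₀, fun i ↦ ?_, ?_, fun i ↦ ?_, ?_⟩
  · by_cases hi : i ∈ Set.range e
    · obtain ⟨a, rfl⟩ := hi
      simpa only [e.injective.extend_apply] using (hw a).le
    · exact (hext i hi).ge
  · rw [← hw_sum]
    exact (Fintype.sum_of_injective e e.injective _ _ hext
      fun a ↦ (e.injective.extend_apply _ _ a).symm).symm
  · have hmem := Set.range_extend_subset e z (fun _ ↦ x₀) ⟨i, rfl⟩
    rcases hmem with h | ⟨_, _, h⟩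
    · exact hz h
    · exact h ▸ hx₀
  · rw [← hwz]
    exact (Fintype.sum_of_injective e e.injective _ _ (fun i hi ↦ by rw [hext i hi, zero_smul])
      fun a ↦ by simp only [e.injective.extend_apply]).symm

theorem coe_sum_mul_eq_sum_coe_mul_coe {ι : Type*} (s : Finset ι) (q d : ι → ℝ) :
    ((∑ i ∈ s, q i * d i : ℝ) : EReal) = ∑ i ∈ s, (q i : EReal) * (d i : EReal) := by
  induction s using Finset.induction_on with
  | empty => simp
  | insert a s ha ih =>
    rw [Finset.sum_insert ha, Finset.sum_insert ha, EReal.coe_add, EReal.coe_mul, ih]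

/-- The real points of the epigraph of `F` over the quadrant `[0,∞)²`. -/
def epigraph2 (F : ℝ → ℝ → EReal) : Set (ℝ × ℝ × ℝ) :=
  {w | 0 ≤ w.1 ∧ 0 ≤ w.2.1 ∧ F w.1 w.2.1 ≤ w.2.2}

/-- The real points of the hypograph of `F` over the quadrant `[0,∞)²`. -/
def hypograph2 (F : ℝ → ℝ → EReal) : Set (ℝ × ℝ × ℝ) :=
  {w | 0 ≤ w.1 ∧ 0 ≤ w.2.1 ∧ (w.2.2 : EReal) ≤ F w.1 w.2.1}

theorem lce2_le_of_mem_convexHull_epigraph2 {F : ℝ → ℝ → EReal} {w : ℝ × ℝ × ℝ}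
    (hw : w ∈ convexHull ℝ (epigraph2 F)) : lce2 F w.1 w.2.1 ≤ w.2.2 := by
  obtain ⟨q, p, hq, hq_sum, hp, rfl⟩ :=
    exists_fin_sum_smul_eq_of_mem_convexHull (k := 4) (by simp) hw
  simp only [Prod.fst_sum, Prod.snd_sum, Prod.smul_fst, Prod.smul_snd, smul_eq_mul]
  calc lce2 F (∑ i, q i * (p i).1) (∑ i, q i * (p i).2.1)
      ≤ ∑ i, (q i : EReal) * F (p i).1 (p i).2.1 :=
        iInf₂_le_of_le q (fun i ↦ ((p i).1, (p i).2.1)) <| iInf₂_le_of_le hq hq_sum <|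
          iInf₂_le_of_le (fun i ↦ ⟨(hp i).1, (hp i).2.1⟩) rfl <| iInf_le _ rfl
    _ ≤ ∑ i, (q i : EReal) * ((p i).2.2 : EReal) := Finset.sum_le_sum fun i _ ↦
        mul_le_mul_of_nonneg_left (hp i).2.2 (EReal.coe_nonneg.2 (hq i))
    _ = ((∑ i, q i * (p i).2.2 : ℝ) : EReal) := (coe_sum_mul_eq_sum_coe_mul_coe _ q _).symm

theorem le_uce2_of_mem_convexHull_hypograph2 {F : ℝ → ℝ → EReal} {w : ℝ × ℝ × ℝ}
    (hw : w ∈ convexHull ℝ (hypograph2 F)) : (w.2.2 : EReal) ≤ uce2 F w.1 w.2.1 := by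
  obtain ⟨q, p, hq, hq_sum, hp, rfl⟩ :=
    exists_fin_sum_smul_eq_of_mem_convexHull (k := 4) (by simp) hw
  simp only [Prod.fst_sum, Prod.snd_sum, Prod.smul_fst, Prod.smul_snd, smul_eq_mul]
  calc ((∑ i, q i * (p i).2.2 : ℝ) : EReal)
      = ∑ i, (q i : EReal) * ((p i).2.2 : EReal) := coe_sum_mul_eq_sum_coe_mul_coe _ q _
    _ ≤ ∑ i, (q i : EReal) * F (p i).1 (p i).2.1 := Finset.sum_le_sum fun i _ ↦
        mul_le_mul_of_nonneg_left (hp i).2.2 (EReal.coe_nonneg.2 (hq i))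
    _ ≤ uce2 F (∑ i, q i * (p i).1) (∑ i, q i * (p i).2.1) :=
        le_iSup₂_of_le q (fun i ↦ ((p i).1, (p i).2.1)) <| le_iSup₂_of_le hq hq_sum <|
          le_iSup₂_of_le (fun i ↦ ⟨(hp i).1, (hp i).2.1⟩) rfl <| le_iSup_of_le rfl le_rfl

theorem nonneg_of_mem_convexHull_hypograph2 {F : ℝ → ℝ → EReal} {w : ℝ × ℝ × ℝ}
    (hw : w ∈ convexHull ℝ (hypograph2 F)) : 0 ≤ w.1 ∧ 0 ≤ w.2.1 := by
  have hsub : hypograph2 F ⊆ Ici 0 ×ˢ Ici 0 ×ˢ univ := fun w hw ↦ ⟨hw.1, hw.2.1, trivial⟩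
  have hconv : Convex ℝ (Ici (0 : ℝ) ×ˢ Ici (0 : ℝ) ×ˢ (univ : Set ℝ)) :=
    (convex_Ici 0).prod ((convex_Ici 0).prod convex_univ)
  have h := convexHull_min hsub hconv hw
  exact ⟨h.1, h.2.1⟩

theorem nonneg_of_forall_sub_mul_lt {a b c : ℝ} (h : ∀ k, 0 ≤ k → b - k * a < c) : 0 ≤ a := by
  by_contra! ha
  have hbc : b < c := by simpa using h 0 le_rfl
  have := h ((c - b) / -a) (div_nonneg (sub_nonneg.2 hbc.le) (neg_nonneg.2 ha.le))
  rw [div_neg, neg_mul, div_mul_cancel₀ _ ha.ne] at this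
  linarith

theorem exists_separating_slopes_of_disjoint_box {α β θ : ℝ} {H : Set (ℝ × ℝ × ℝ)}
    (hH : Convex ℝ H) (hdisj : Disjoint (Iio α ×ˢ Iio β ×ˢ Ioi θ) H) (hne : H.Nonempty) :
    ∃ a b c : ℝ, 0 ≤ a ∧ 0 ≤ b ∧ 0 ≤ c ∧ ¬(a = 0 ∧ b = 0 ∧ c = 0) ∧
      ∀ w ∈ H, a * α + b * β - c * θ ≤ a * w.1 + b * w.2.1 - c * w.2.2 := by
  obtain ⟨f, r, hO, hHr⟩ := geometric_hahn_banach_open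
    ((convex_Iio α).prod ((convex_Iio β).prod (convex_Ioi θ)))
    (isOpen_Iio.prod (isOpen_Iio.prod isOpen_Ioi)) hH hdisj
  set a := f (1, 0, 0) with ha
  set b := f (0, 1, 0) with hb
  set c := -f (0, 0, 1) with hc
  have hf : ∀ x y z : ℝ, f (x, y, z) = a * x + b * y - c * z := fun x y z ↦ by
    have : ((x, y, z) : ℝ × ℝ × ℝ) = x • (1, 0, 0) + y • (0, 1, 0) + z • (0, 0, 1) := by simp
    rw [this, map_add, map_add, map_smul, map_smul, map_smul]
    simp only [smul_eq_mul, ha, hb, hc]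
    ring
  have hbox : ∀ p q m : ℝ, 0 < p → 0 < q → 0 < m →
      a * (α - p) + b * (β - q) - c * (θ + m) < r := fun p q m hp hq hm ↦ by
    rw [← hf]
    exact hO _ ⟨sub_lt_self α hp, sub_lt_self β hq, lt_add_of_pos_right θ hm⟩
  refine ⟨a, b, c, ?_, ?_, ?_, ?_, fun w hw ↦ ?_⟩
  · exact nonneg_of_forall_sub_mul_lt (b := a * (α - 1) + b * (β - 1) - c * (θ + 1)) (c := r)
      fun k hk ↦ by linarith [hbox (1 + k) 1 1 (by linarith) one_pos one_pos]
  · exact nonneg_of_forall_sub_mul_lt (b := a * (α - 1) + b * (β - 1) - c * (θ + 1)) (c := r)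
      fun k hk ↦ by linarith [hbox 1 (1 + k) 1 one_pos (by linarith) one_pos]
  · exact nonneg_of_forall_sub_mul_lt (b := a * (α - 1) + b * (β - 1) - c * (θ + 1)) (c := r)
      fun k hk ↦ by linarith [hbox 1 1 (1 + k) one_pos one_pos (by linarith)]
  · rintro ⟨ha0, hb0, hc0⟩
    obtain ⟨w, hw⟩ := hne
    have hr := hHr w hw
    have := hbox 1 1 1 one_pos one_pos one_pos
    rw [show w = (w.1, w.2.1, w.2.2) from rfl, hf, ha0, hb0, hc0] at hr
    rw [ha0, hb0, hc0] at this
    linarith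
  · have hr := hHr w hw
    rw [show w = (w.1, w.2.1, w.2.2) from rfl, hf] at hr
    have hlim : Tendsto (fun ε : ℝ ↦ a * (α - ε) + b * (β - ε) - c * (θ + ε)) (𝓝[>] 0)
        (𝓝 (a * α + b * β - c * θ)) := by
      refine (Continuous.tendsto' (by fun_prop) 0 _ (by simp)).mono_left nhdsWithin_le_nhds
    exact le_trans (le_of_tendsto hlim (eventually_mem_nhdsWithin.mono fun ε hε ↦
      (hbox ε ε ε hε hε hε).le)) hr

theorem exists_supergradient_of_uce2_le {F : ℝ → ℝ → EReal} (hF : F 0 0 ≠ ⊥) {α β θ : ℝ}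
    (hα : 0 < α) (hβ : 0 < β)
    (hθ : ∀ s t, 0 ≤ s → s ≤ α → 0 ≤ t → t ≤ β → uce2 F s t ≤ θ) :
    ∃ u v : ℝ, 0 ≤ u ∧ 0 ≤ v ∧
      ∀ s t : ℝ, 0 ≤ s → 0 ≤ t → F s t ≤ (θ + u * (s - α) + v * (t - β) : ℝ) := by
  obtain ⟨d₀, -, hd₀⟩ := EReal.lt_iff_exists_real_btwn.1 (bot_lt_iff_ne_bot.2 hF)
  have hzero : ((0, 0, d₀) : ℝ × ℝ × ℝ) ∈ convexHull ℝ (hypograph2 F) :=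
    subset_convexHull ℝ _ ⟨le_rfl, le_rfl, hd₀.le⟩
  have hdisj : Disjoint (Iio α ×ˢ Iio β ×ˢ Ioi θ) (convexHull ℝ (hypograph2 F)) := by
    refine Set.disjoint_left.2 fun w ⟨hwα, hwβ, hwθ⟩ hw ↦ ?_
    obtain ⟨h₁, h₂⟩ := nonneg_of_mem_convexHull_hypograph2 hw
    have := (le_uce2_of_mem_convexHull_hypograph2 hw).trans
      (hθ _ _ h₁ (mem_Iio.1 hwα).le h₂ (mem_Iio.1 hwβ).le)
    exact (EReal.coe_le_coe_iff.1 this).not_gt hwθ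
  obtain ⟨a, b, c, ha, hb, hc, hne, hsep⟩ :=
    exists_separating_slopes_of_disjoint_box (convex_convexHull ℝ _) hdisj ⟨_, hzero⟩
  -- The hyperplane is not vertical, since it passes below a point over the corner `(0, 0)`.
  have hc_pos : 0 < c := by
    refine hc.lt_of_ne' fun hc0 ↦ hne ?_
    have h := hsep _ hzero
    simp only [hc0, mul_zero, zero_mul, sub_zero, add_zero] at h
    have haα := mul_nonneg ha hα.le
    have hbβ := mul_nonneg hb hβ.le
    exact ⟨(mul_eq_zero.1 (by linarith : a * α = 0)).resolve_right hα.ne',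
      (mul_eq_zero.1 (by linarith : b * β = 0)).resolve_right hβ.ne', hc0⟩
  refine ⟨a / c, b / c, div_nonneg ha hc, div_nonneg hb hc, fun s t hs ht ↦
    EReal.ge_of_forall_gt_iff_ge.1 fun d hd ↦ EReal.coe_le_coe_iff.2 ?_⟩
  have h := hsep (s, t, d) (subset_convexHull ℝ _ ⟨hs, ht, hd.le⟩)
  have hdiv : θ + a / c * (s - α) + b / c * (t - β)
      = d + ((a * s + b * t - c * d) - (a * α + b * β - c * θ)) / c := by
    field_simp
    ring
  rw [hdiv]
  exact le_add_of_nonneg_right (div_nonneg (sub_nonneg.2 h) hc)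

theorem exists_pos_supergradient_of_uce2_le {F : ℝ → ℝ → EReal} (hF : F 0 0 ≠ ⊥) {α β θ η : ℝ}
    (hα : 0 < α) (hβ : 0 < β)
    (hθ : ∀ s t, 0 ≤ s → s ≤ α → 0 ≤ t → t ≤ β → uce2 F s t ≤ θ) (hη : θ < η) :
    ∃ u v : ℝ, 0 < u ∧ 0 < v ∧
      ∀ s t : ℝ, 0 ≤ s → 0 ≤ t → F s t ≤ (η + u * (s - α) + v * (t - β) : ℝ) := by
  obtain ⟨u, v, hu, hv, huv⟩ := exists_supergradient_of_uce2_le hF hα hβ hθ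
  set ε := (η - θ) / (α + β)
  have hε : 0 < ε := div_pos (sub_pos.2 hη) (add_pos hα hβ)
  have hεη : ε * (α + β) = η - θ := div_mul_cancel₀ _ (add_pos hα hβ).ne'
  refine ⟨u + ε, v + ε, by positivity, by positivity, fun s t hs ht ↦
    (huv s t hs ht).trans (EReal.coe_le_coe_iff.2 ?_)⟩
  linarith [mul_nonneg hε.le hs, mul_nonneg hε.le ht]

theorem KL_eq_klDiv {Z : Type*} [MeasurableSpace Z] (Q P : Measure Z) [IsProbabilityMeasure Q]
    [IsProbabilityMeasure P] : KL Q P = klDiv Q P := by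
  unfold KL
  split_ifs with h
  · rw [← EReal.coe_ennreal_toReal (klDiv_ne_top h.1 h.2),
      toReal_klDiv_of_measure_eq h.1 (by simp)]
    rfl
  · rw [klDiv_eq_top_iff.2 fun hac hint ↦ h ⟨hac, hint⟩, EReal.coe_ennreal_top]

theorem KL_eq_coe_toReal_klDiv {Z : Type*} [MeasurableSpace Z] {Q P : Measure Z}
    [IsProbabilityMeasure Q] [IsProbabilityMeasure P] (h : klDiv Q P ≠ ⊤) :
    KL Q P = ((klDiv Q P).toReal : ℝ) := by
  rw [KL_eq_klDiv, EReal.coe_ennreal_toReal h]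

section ChainRule

variable {A B C D : Type*} [MeasurableSpace A] [MeasurableSpace B] [MeasurableSpace C]
  [MeasurableSpace D]

theorem klDiv_kernel_eq_lintegral_rnDeriv [MeasurableSpace.CountableOrCountablyGenerated A B]
    {κ η : Kernel A B} [IsFiniteKernel κ] [IsFiniteKernel η] {a : A} (h : κ a ≪ η a) :
    klDiv (κ a) (η a) = ∫⁻ b, ENNReal.ofReal (klFun (κ.rnDeriv η a b).toReal) ∂η a := by
  rw [klDiv_eq_lintegral_klFun_of_ac h]
  refine lintegral_congr_ae ?_
  filter_upwards [κ.rnDeriv_eq_rnDeriv_measure (η := η) (a := a)] with b hb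
  rw [hb]

theorem measurable_klFun_kernel_rnDeriv [MeasurableSpace.CountableOrCountablyGenerated A B]
    (κ η : Kernel A B) :
    Measurable fun p : A × B ↦ ENNReal.ofReal (klFun (κ.rnDeriv η p.1 p.2).toReal) :=
  (measurable_klFun.comp (κ.measurable_rnDeriv η).ennreal_toReal).ennreal_ofReal

theorem measurable_klDiv_kernel [MeasurableSpace.CountableOrCountablyGenerated A B]
    (κ η : Kernel A B) [IsFiniteKernel κ] [IsFiniteKernel η] :
    Measurable fun a ↦ klDiv (κ a) (η a) := by
  have hite : (fun a ↦ klDiv (κ a) (η a)) = fun a ↦ if κ a ≪ η a then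
      ∫⁻ b, ENNReal.ofReal (klFun (κ.rnDeriv η a b).toReal) ∂η a else ⊤ := by
    ext a
    split_ifs with h
    · exact klDiv_kernel_eq_lintegral_rnDeriv h
    · exact klDiv_of_not_ac h
  rw [hite]
  exact Measurable.ite (Kernel.measurableSet_absolutelyContinuous κ η)
    (measurable_klFun_kernel_rnDeriv κ η).lintegral_kernel_prod_right' measurable_const

theorem rnDeriv_compProd_right [MeasurableSpace.CountableOrCountablyGenerated A B]
    {μ : Measure A} [IsFiniteMeasure μ] {κ η : Kernel A B} [IsFiniteKernel κ] [IsFiniteKernel η]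
    (h : ∀ᵐ a ∂μ, κ a ≪ η a) :
    (μ ⊗ₘ κ).rnDeriv (μ ⊗ₘ η) =ᵐ[μ ⊗ₘ η] fun p ↦ κ.rnDeriv η p.1 p.2 := by
  have hdens : μ ⊗ₘ κ = (μ ⊗ₘ η).withDensity fun p ↦ κ.rnDeriv η p.1 p.2 := by
    rw [← Measure.compProd_withDensity (κ.measurable_rnDeriv η)]
    exact Measure.compProd_congr (h.mono fun a ha ↦ (Kernel.withDensity_rnDeriv_eq ha).symm)
  rw [hdens]
  exact Measure.rnDeriv_withDensity _ (κ.measurable_rnDeriv η)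

theorem klDiv_compProd_right_eq_lintegral [MeasurableSpace.CountableOrCountablyGenerated A B]
    (μ : Measure A) [IsFiniteMeasure μ] (κ η : Kernel A B) [IsFiniteKernel κ]
    [IsFiniteKernel η] : klDiv (μ ⊗ₘ κ) (μ ⊗ₘ η) = ∫⁻ a, klDiv (κ a) (η a) ∂μ := by
  by_cases h : ∀ᵐ a ∂μ, κ a ≪ η a
  · calc klDiv (μ ⊗ₘ κ) (μ ⊗ₘ η)
        = ∫⁻ p, ENNReal.ofReal (klFun (κ.rnDeriv η p.1 p.2).toReal) ∂(μ ⊗ₘ η) := by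
          rw [klDiv_eq_lintegral_klFun_of_ac (Measure.absolutelyContinuous_compProd_right_iff.2 h)]
          exact lintegral_congr_ae ((rnDeriv_compProd_right h).mono fun p hp ↦ by simp only [hp])
      _ = ∫⁻ a, ∫⁻ b, ENNReal.ofReal (klFun (κ.rnDeriv η a b).toReal) ∂η a ∂μ :=
          Measure.lintegral_compProd (measurable_klFun_kernel_rnDeriv κ η)
      _ = ∫⁻ a, klDiv (κ a) (η a) ∂μ :=
          lintegral_congr_ae (h.mono fun a ha ↦ (klDiv_kernel_eq_lintegral_rnDeriv ha).symm)
  · rw [klDiv_of_not_ac fun hac ↦ h (Measure.absolutelyContinuous_compProd_right_iff.1 hac)]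
    refine (of_not_not fun hfin ↦ h ?_ : ∫⁻ a, klDiv (κ a) (η a) ∂μ = ⊤).symm
    filter_upwards [ae_lt_top (measurable_klDiv_kernel κ η) hfin] with a ha
    exact (klDiv_ne_top_iff.1 ha.ne).1

theorem klDiv_compProd_prod_eq_add [MeasurableSpace.CountableOrCountablyGenerated A B]
    (μ ν : Measure A) [IsFiniteMeasure μ] [IsFiniteMeasure ν] (κ : Kernel A B)
    [IsMarkovKernel κ] (ρ : Measure B) [IsProbabilityMeasure ρ] :
    klDiv (μ ⊗ₘ κ) (ν.prod ρ) = klDiv μ ν + ∫⁻ a, klDiv (κ a) ρ ∂μ := by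
  rw [← Measure.compProd_const, klDiv_compProd_eq_add, klDiv_compProd_right_eq_lintegral]
  simp only [Kernel.const_apply]

theorem klDiv_prod_eq_add [StandardBorelSpace B] (R : Measure (A × B)) [IsProbabilityMeasure R]
    (ν : Measure A) [IsFiniteMeasure ν] (ρ : Measure B) [IsProbabilityMeasure ρ] :
    klDiv R (ν.prod ρ) = klDiv R.fst ν + klDiv R (R.fst.prod ρ) := by
  have : Nonempty B := nonempty_of_isProbabilityMeasure ρ
  nth_rw 1 3 [← R.disintegrate R.condKernel]
  rw [← Measure.compProd_const, ← Measure.compProd_const, klDiv_compProd_eq_add]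

theorem klDiv_map_compProd_prod_le [StandardBorelSpace D] (μ : Measure A)
    [IsProbabilityMeasure μ] (κ : Kernel A B) [IsMarkovKernel κ] {f : A → C} {g : B → D}
    (hf : Measurable f) (hg : Measurable g) (ν : Measure C) [IsFiniteMeasure ν]
    (ρ : Measure D) [IsProbabilityMeasure ρ] :
    klDiv ((μ ⊗ₘ κ).map (Prod.map f g)) (ν.prod ρ)
      ≤ klDiv (μ.map f) ν + ∫⁻ a, klDiv ((κ a).map g) ρ ∂μ := by
  have : IsMarkovKernel (κ.map g) := Kernel.IsMarkovKernel.map _ hg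
  have : IsProbabilityMeasure (μ.map f) := Measure.isProbabilityMeasure_map hf.aemeasurable
  have hfid : Measurable (Prod.map f (id : D → D)) := hf.prodMap measurable_id
  have hmap : (μ ⊗ₘ κ).map (Prod.map f g) = (μ ⊗ₘ κ.map g).map (Prod.map f id) := by
    rw [Measure.compProd_map hg, Measure.map_map hfid (measurable_id.prodMap hg)]
    rfl
  have hfst : ((μ ⊗ₘ κ.map g).map (Prod.map f id)).fst = μ.map f := by
    rw [Measure.fst, Measure.map_map measurable_fst hfid,
      show Prod.fst ∘ Prod.map f id = f ∘ (Prod.fst : A × D → A) from rfl,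
      ← Measure.map_map hf measurable_fst]
    exact congrArg (Measure.map f) (Measure.fst_compProd μ (κ.map g))
  have hprod : (μ.map f).prod ρ = (μ ⊗ₘ Kernel.const A ρ).map (Prod.map f id) := by
    rw [Measure.compProd_const, ← Measure.map_prod_map _ _ hf measurable_id, Measure.map_id]
  have : IsProbabilityMeasure ((μ ⊗ₘ κ.map g).map (Prod.map f id)) :=
    Measure.isProbabilityMeasure_map hfid.aemeasurable
  calc klDiv ((μ ⊗ₘ κ).map (Prod.map f g)) (ν.prod ρ)
      = klDiv (μ.map f) ν + klDiv ((μ ⊗ₘ κ.map g).map (Prod.map f id)) ((μ.map f).prod ρ) := by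
        rw [hmap, klDiv_prod_eq_add, hfst]
    _ ≤ klDiv (μ.map f) ν + klDiv (μ ⊗ₘ κ.map g) (μ ⊗ₘ Kernel.const A ρ) := by
        rw [hprod]
        gcongr
        exact klDiv_map_le _ _ hfid
    _ = klDiv (μ.map f) ν + ∫⁻ a, klDiv ((κ a).map g) ρ ∂μ := by
        rw [klDiv_compProd_right_eq_lintegral]
        simp only [Kernel.map_apply _ hg, Kernel.const_apply]

end ChainRule

section Gibbs

variable {Z : Type*} [MeasurableSpace Z] {P Q : Measure Z}

theorem ofReal_exp_integral_le_lintegral [IsProbabilityMeasure Q] {f : Z → ℝ}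
    (hf : Integrable f Q) :
    ENNReal.ofReal (Real.exp (∫ x, f x ∂Q)) ≤ ∫⁻ x, ENNReal.ofReal (Real.exp (f x)) ∂Q := by
  by_cases hexp : Integrable (fun x ↦ Real.exp (f x)) Q
  · rw [← ofReal_integral_eq_lintegral_ofReal hexp (ae_of_all _ fun x ↦ (Real.exp_pos _).le)]
    exact ENNReal.ofReal_le_ofReal <| convexOn_exp.map_integral_le Real.continuous_exp.continuousOn
      isClosed_univ (ae_of_all _ fun _ ↦ mem_univ _) hf hexp
  · have hmeas : AEStronglyMeasurable (fun x ↦ Real.exp (f x)) Q :=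
      Real.continuous_exp.comp_aestronglyMeasurable hf.aestronglyMeasurable
    have htop : ¬∫⁻ x, ENNReal.ofReal (Real.exp (f x)) ∂Q ≠ ⊤ := by
      rwa [lintegral_ofReal_ne_top_iff_integrable hmeas (ae_of_all _ fun x ↦ (Real.exp_pos _).le)]
    rw [not_not.1 htop]
    exact le_top

theorem lintegral_mul_exp_neg_llr_le [SigmaFinite P] [SigmaFinite Q] (hQP : Q ≪ P)
    {F : Z → ℝ≥0∞} (hF : Measurable F) :
    ∫⁻ x, F x * ENNReal.ofReal (Real.exp (-llr Q P x)) ∂Q ≤ ∫⁻ x, F x ∂P := by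
  have hmeas : Measurable fun x ↦ F x * ENNReal.ofReal (Real.exp (-llr Q P x)) :=
    hF.mul (measurable_llr Q P).neg.exp.ennreal_ofReal
  rw [← lintegral_rnDeriv_mul hQP hmeas.aemeasurable]
  refine lintegral_mono_ae ?_
  filter_upwards [Q.rnDeriv_lt_top P] with x hx
  rcases eq_or_ne (Q.rnDeriv P x) 0 with h0 | h0
  · simp [h0]
  · have hpos := ENNReal.toReal_pos h0 hx.ne
    rw [llr, Real.exp_neg, Real.exp_log hpos, ENNReal.ofReal_inv_of_pos hpos,
      ENNReal.ofReal_toReal hx.ne, mul_left_comm, ENNReal.mul_inv_cancel h0 hx.ne, mul_one]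

theorem ofReal_exp_integral_sub_klDiv_le_lintegral [IsProbabilityMeasure P]
    [IsProbabilityMeasure Q] (hQ : klDiv Q P ≠ ⊤) {h : Z → ℝ} (hh : Integrable h Q)
    {F : Z → ℝ≥0∞} (hF : Measurable F)
    (hhF : ∀ᵐ x ∂Q, ENNReal.ofReal (Real.exp (h x)) ≤ F x) :
    ENNReal.ofReal (Real.exp (∫ x, h x ∂Q - (klDiv Q P).toReal)) ≤ ∫⁻ x, F x ∂P := by
  obtain ⟨hac, hint⟩ := klDiv_ne_top_iff.1 hQ
  calc ENNReal.ofReal (Real.exp (∫ x, h x ∂Q - (klDiv Q P).toReal))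
      = ENNReal.ofReal (Real.exp (∫ x, h x - llr Q P x ∂Q)) := by
        rw [integral_sub hh hint, toReal_klDiv_of_measure_eq hac (by simp)]
    _ ≤ ∫⁻ x, ENNReal.ofReal (Real.exp (h x - llr Q P x)) ∂Q :=
        ofReal_exp_integral_le_lintegral (hh.sub hint)
    _ ≤ ∫⁻ x, F x * ENNReal.ofReal (Real.exp (-llr Q P x)) ∂Q := lintegral_mono_ae <| by
        filter_upwards [hhF] with x hx
        rw [sub_eq_add_neg, Real.exp_add, ENNReal.ofReal_mul (Real.exp_pos _).le]
        gcongr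
    _ ≤ ∫⁻ x, F x ∂P := lintegral_mul_exp_neg_llr_le hac hF

theorem ofReal_exp_neg_klDiv_le_measure [IsProbabilityMeasure P] [IsProbabilityMeasure Q]
    (hQ : klDiv Q P ≠ ⊤) {S : Set Z} (hS : MeasurableSet S) (hQS : ∀ᵐ x ∂Q, x ∈ S) :
    ENNReal.ofReal (Real.exp (-(klDiv Q P).toReal)) ≤ P S := by
  have h := ofReal_exp_integral_sub_klDiv_le_lintegral hQ (integrable_zero Z ℝ Q)
    (measurable_one.indicator hS) (hQS.mono fun x hx ↦ by simp [hx])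
  simpa [lintegral_indicator_one hS] using h

end Gibbs

section Reweight

variable {Z : Type*} [MeasurableSpace Z]

/-- The probability measure with density proportional to the weight `φ` with respect to `P`;
unlike `Measure.tilted`, it allows `φ` to vanish. -/
def reweight (P : Measure Z) (φ : Z → ℝ≥0∞) : Measure Z :=
  P.withDensity fun x ↦ (∫⁻ y, φ y ∂P)⁻¹ * φ x

variable {P : Measure Z} {φ : Z → ℝ≥0∞}

theorem isProbabilityMeasure_reweight (hφ : Measurable φ) (h0 : ∫⁻ x, φ x ∂P ≠ 0)
    (htop : ∫⁻ x, φ x ∂P ≠ ⊤) : IsProbabilityMeasure (reweight P φ) where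
  measure_univ := by
    rw [reweight, withDensity_apply _ MeasurableSet.univ, setLIntegral_univ,
      lintegral_const_mul _ hφ, ENNReal.inv_mul_cancel h0 htop]

theorem reweight_absolutelyContinuous : reweight P φ ≪ P := withDensity_absolutelyContinuous _ _

theorem ae_ne_zero_reweight (hφ : Measurable φ) : ∀ᵐ x ∂reweight P φ, φ x ≠ 0 := by
  rw [reweight, ae_withDensity_iff (hφ.const_mul _)]
  exact ae_of_all _ fun x hx ↦ right_ne_zero_of_mul hx

theorem llr_reweight [SigmaFinite P] (hφ : Measurable φ) (h0 : ∫⁻ x, φ x ∂P ≠ 0)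
    (htop : ∫⁻ x, φ x ∂P ≠ ⊤) (hφ_top : ∀ x, φ x ≠ ⊤) :
    llr (reweight P φ) P =ᵐ[reweight P φ]
      fun x ↦ Real.log (φ x).toReal - Real.log (∫⁻ x, φ x ∂P).toReal := by
  filter_upwards [reweight_absolutelyContinuous (Measure.rnDeriv_withDensity P (hφ.const_mul _)),
    ae_ne_zero_reweight hφ] with x hx hx0
  have hφx := (ENNReal.toReal_pos hx0 (hφ_top x)).ne'
  have hint := (ENNReal.toReal_pos h0 htop).ne'
  change Real.log ((P.withDensity _).rnDeriv P x).toReal = _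
  rw [hx, ENNReal.toReal_mul, ENNReal.toReal_inv, Real.log_mul (inv_ne_zero hint) hφx,
    Real.log_inv, neg_add_eq_sub]

theorem integrable_log_reweight [IsFiniteMeasure P] (hφ : Measurable φ) (hφ_le : ∀ x, φ x ≤ 1)
    (h0 : ∫⁻ x, φ x ∂P ≠ 0) : Integrable (fun x ↦ Real.log (φ x).toReal) (reweight P φ) := by
  set c := ∫⁻ x, φ x ∂P
  have hc : c⁻¹ ≠ ⊤ := ENNReal.inv_ne_top.2 h0
  have hdens : ∀ x, c⁻¹ * φ x < ⊤ := fun x ↦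
    ENNReal.mul_lt_top hc.lt_top ((hφ_le x).trans_lt ENNReal.one_lt_top)
  rw [reweight, integrable_withDensity_iff_integrable_smul' (hφ.const_mul _) (ae_of_all _ hdens)]
  have hmeas := (hφ.const_mul c⁻¹).ennreal_toReal.smul hφ.ennreal_toReal.log
  refine Integrable.of_bound hmeas.aestronglyMeasurable c⁻¹.toReal (ae_of_all _ fun x ↦ ?_)
  have hle : (φ x).toReal ≤ 1 := ENNReal.toReal_mono ENNReal.one_ne_top (hφ_le x)
  have hbound : |Real.log (φ x).toReal * (φ x).toReal| ≤ 1 := by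
    rcases (ENNReal.toReal_nonneg (a := φ x)).eq_or_lt with h | h
    · simp [← h]
    · exact (Real.abs_log_mul_self_lt _ h hle).le
  rw [ENNReal.toReal_mul, smul_eq_mul, mul_assoc, norm_mul, Real.norm_of_nonneg
    ENNReal.toReal_nonneg, mul_comm (φ x).toReal, Real.norm_eq_abs]
  exact mul_le_of_le_one_right ENNReal.toReal_nonneg hbound

theorem klDiv_reweight_ne_top_and_integral_log_eq [IsProbabilityMeasure P] (hφ : Measurable φ)
    (hφ_le : ∀ x, φ x ≤ 1) (h0 : ∫⁻ x, φ x ∂P ≠ 0) :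
    klDiv (reweight P φ) P ≠ ⊤ ∧ ∫ x, Real.log (φ x).toReal ∂reweight P φ =
      (klDiv (reweight P φ) P).toReal + Real.log (∫⁻ x, φ x ∂P).toReal := by
  have htop : ∫⁻ x, φ x ∂P ≠ ⊤ :=
    ((lintegral_mono hφ_le).trans_lt (by simp)).ne
  have := isProbabilityMeasure_reweight hφ h0 htop
  have hlog := integrable_log_reweight hφ hφ_le h0
  have hllr := llr_reweight hφ h0 htop fun x ↦ ((hφ_le x).trans_lt ENNReal.one_lt_top).ne
  have hint : Integrable (llr (reweight P φ) P) (reweight P φ) :=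
    (integrable_congr hllr).2 (hlog.sub (integrable_const _))
  refine ⟨klDiv_ne_top reweight_absolutelyContinuous hint, ?_⟩
  rw [toReal_klDiv_of_measure_eq reweight_absolutelyContinuous (by simp), integral_congr_ae hllr,
    integral_sub hlog (integrable_const _)]
  simp

theorem reweight_indicator_one {S : Set Z} (hS : MeasurableSet S) :
    reweight P (S.indicator 1) = P[|S] := by
  have hsmul : (fun x ↦ (P S)⁻¹ * S.indicator (1 : Z → ℝ≥0∞) x) = (P S)⁻¹ • S.indicator 1 := rfl
  rw [reweight, lintegral_indicator_one hS, hsmul,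
    withDensity_smul _ (measurable_one.indicator hS), withDensity_indicator_one hS,
    ProbabilityTheory.cond]

theorem klDiv_cond_ne_top_and_toReal_eq [IsProbabilityMeasure P] {S : Set Z}
    (hS : MeasurableSet S) (h0 : P S ≠ 0) :
    klDiv P[|S] P ≠ ⊤ ∧ (klDiv P[|S] P).toReal = -Real.log (P S).toReal := by
  have hint : ∫⁻ x, S.indicator (1 : Z → ℝ≥0∞) x ∂P = P S := lintegral_indicator_one hS
  obtain ⟨hne, hlog⟩ := klDiv_reweight_ne_top_and_integral_log_eq (P := P)
    (measurable_one.indicator hS) (indicator_le_self' fun _ _ ↦ zero_le_one) (hint ▸ h0)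
  have hzero : ∫ x, Real.log (S.indicator (1 : Z → ℝ≥0∞) x).toReal ∂P[|S] = 0 :=
    integral_eq_zero_of_ae (ae_of_all _ fun x ↦ by by_cases hx : x ∈ S <;> simp [hx])
  rw [reweight_indicator_one hS] at hne hlog
  rw [hzero, hint] at hlog
  exact ⟨hne, by linarith⟩

end Reweight

theorem convex_lowerClosure {V : Type*} [AddCommGroup V] [PartialOrder V] [IsOrderedAddMonoid V]
    [Module ℝ V] [PosSMulMono ℝ V] {s : Set V} (hs : Convex ℝ s) :
    Convex ℝ (lowerClosure s : Set V) := by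
  rintro x ⟨x', hx', hxx'⟩ y ⟨y', hy', hyy'⟩ a b ha hb hab
  exact ⟨a • x' + b • y', hs hx' hy' ha hb hab, by gcongr⟩

section KlTriple

open scoped Pointwise

variable {Z Z' A A' B B' : Type*} [MeasurableSpace Z] [MeasurableSpace Z'] [MeasurableSpace A]
  [MeasurableSpace A'] [MeasurableSpace B] [MeasurableSpace B']

theorem klDiv_map_measurableEquiv (e : Z ≃ᵐ Z') (Q P : Measure Z) [IsFiniteMeasure Q]
    [IsFiniteMeasure P] : klDiv (Q.map e) (P.map e) = klDiv Q P := by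
  refine (klDiv_map_le Q P e.measurable).antisymm ?_
  simpa using klDiv_map_le (Q.map e) (P.map e) e.symm.measurable

/-- The divergences of the images of `Q` under `f` and under `g`, and the negated divergence of `Q`,
all relative to `P`. The sign makes `≤` mean that the second triple has larger marginal divergences
and a smaller joint one. -/
def klTriple (f : Z → A) (g : Z → B) (P Q : Measure Z) : ℝ × ℝ × ℝ :=
  ((klDiv (Q.map f) (P.map f)).toReal, (klDiv (Q.map g) (P.map g)).toReal, -(klDiv Q P).toReal)

/-- The triples `klTriple f g P Q` of all probability measures `Q` of finite divergence. -/
def klTriples (f : Z → A) (g : Z → B) (P : Measure Z) : Set (ℝ × ℝ × ℝ) :=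
  klTriple f g P '' {Q | IsProbabilityMeasure Q ∧ klDiv Q P ≠ ⊤}

theorem klTriple_self (f : Z → A) (g : Z → B) (P : Measure Z) [IsFiniteMeasure P] :
    klTriple f g P P = 0 := by
  simp [klTriple, klDiv_self]

theorem zero_mem_klTriples (f : Z → A) (g : Z → B) (P : Measure Z) [IsProbabilityMeasure P] :
    0 ∈ klTriples f g P :=
  ⟨P, ⟨inferInstance, by simp [klDiv_self]⟩, klTriple_self f g P⟩

theorem klTriple_map_measurableEquiv {P Q : Measure Z} [IsFiniteMeasure P] [IsFiniteMeasure Q]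
    (e : Z ≃ᵐ Z') (eA : A ≃ᵐ A') (eB : B ≃ᵐ B') {f : Z → A} {g : Z → B} {f' : Z' → A'}
    {g' : Z' → B'} (hf : Measurable f) (hg : Measurable g) (hf' : Measurable f')
    (hg' : Measurable g') (hff' : f' ∘ e = eA ∘ f) (hgg' : g' ∘ e = eB ∘ g) :
    klTriple f' g' (P.map e) (Q.map e) = klTriple f g P Q := by
  unfold klTriple
  rw [Measure.map_map hf' e.measurable, Measure.map_map hf' e.measurable,
    Measure.map_map hg' e.measurable, Measure.map_map hg' e.measurable, hff', hgg',
    ← Measure.map_map eA.measurable hf, ← Measure.map_map eA.measurable hf,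
    ← Measure.map_map eB.measurable hg, ← Measure.map_map eB.measurable hg,
    klDiv_map_measurableEquiv, klDiv_map_measurableEquiv, klDiv_map_measurableEquiv]

section CompProd

variable {μ : Measure Z} {κ : Kernel Z Z'} [IsMarkovKernel κ] {P : Measure Z}
  [IsProbabilityMeasure P] {P' : Measure Z'} [IsProbabilityMeasure P']

theorem measurable_klDiv_map [StandardBorelSpace B] {g : Z' → B} (hg : Measurable g) :
    Measurable fun a ↦ klDiv ((κ a).map g) (P'.map g) := by
  have : IsMarkovKernel (κ.map g) := Kernel.IsMarkovKernel.map _ hg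
  simpa only [Kernel.map_apply _ hg, Kernel.const_apply] using
    measurable_klDiv_kernel (κ.map g) (Kernel.const Z (P'.map g))

theorem lintegral_klDiv_map_ne_top (hκ : ∫⁻ a, klDiv (κ a) P' ∂μ ≠ ⊤) {g : Z' → B}
    (hg : Measurable g) : ∫⁻ a, klDiv ((κ a).map g) (P'.map g) ∂μ ≠ ⊤ :=
  ne_top_of_le_ne_top hκ (lintegral_mono fun _ ↦ klDiv_map_le _ _ hg)

theorem integrable_toReal_klDiv_map [StandardBorelSpace B]
    (hκ : ∫⁻ a, klDiv (κ a) P' ∂μ ≠ ⊤) {g : Z' → B} (hg : Measurable g) :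
    Integrable (fun a ↦ (klDiv ((κ a).map g) (P'.map g)).toReal) μ :=
  integrable_toReal_of_lintegral_ne_top (measurable_klDiv_map hg).aemeasurable
    (lintegral_klDiv_map_ne_top hκ hg)

theorem integral_toReal_klDiv_map [StandardBorelSpace B]
    (hκ : ∫⁻ a, klDiv (κ a) P' ∂μ ≠ ⊤) {g : Z' → B} (hg : Measurable g) :
    ∫ a, (klDiv ((κ a).map g) (P'.map g)).toReal ∂μ
      = (∫⁻ a, klDiv ((κ a).map g) (P'.map g) ∂μ).toReal :=
  integral_toReal (measurable_klDiv_map hg).aemeasurable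
    (ae_lt_top (measurable_klDiv_map hg) (lintegral_klDiv_map_ne_top hκ hg))

theorem integral_toReal_klDiv [StandardBorelSpace Z'] (hκ : ∫⁻ a, klDiv (κ a) P' ∂μ ≠ ⊤) :
    ∫ a, (klDiv (κ a) P').toReal ∂μ = (∫⁻ a, klDiv (κ a) P' ∂μ).toReal := by
  simpa only [Measure.map_id] using integral_toReal_klDiv_map hκ measurable_id

theorem integrable_klTriple [StandardBorelSpace Z'] [StandardBorelSpace A]
    [StandardBorelSpace B] (hκ : ∫⁻ a, klDiv (κ a) P' ∂μ ≠ ⊤) {f : Z' → A} {g : Z' → B}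
    (hf : Measurable f) (hg : Measurable g) :
    Integrable (fun a ↦ klTriple f g P' (κ a)) μ := by
  have hid : Integrable (fun a ↦ (klDiv (κ a) P').toReal) μ := by
    simpa only [Measure.map_id] using integrable_toReal_klDiv_map hκ measurable_id
  exact (integrable_toReal_klDiv_map hκ hf).prodMk
    ((integrable_toReal_klDiv_map hκ hg).prodMk hid.neg)

variable [IsProbabilityMeasure μ]

theorem toReal_klDiv_map_compProd_le [StandardBorelSpace B'] (hμ : klDiv μ P ≠ ⊤)
    (hκ : ∫⁻ a, klDiv (κ a) P' ∂μ ≠ ⊤) {g : Z → B} (hg : Measurable g) {g' : Z' → B'}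
    (hg' : Measurable g') :
    (klDiv ((μ ⊗ₘ κ).map (Prod.map g g')) ((P.prod P').map (Prod.map g g'))).toReal ≤
      (klDiv (μ.map g) (P.map g)).toReal + ∫ a, (klDiv ((κ a).map g') (P'.map g')).toReal ∂μ := by
  have hμg : klDiv (μ.map g) (P.map g) ≠ ⊤ := ne_top_of_le_ne_top hμ (klDiv_map_le _ _ hg)
  have hκg := lintegral_klDiv_map_ne_top hκ hg'
  have := Measure.isProbabilityMeasure_map (μ := P') hg'.aemeasurable
  rw [integral_toReal_klDiv_map hκ hg', ← ENNReal.toReal_add hμg hκg,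
    ← Measure.map_prod_map _ _ hg hg']
  exact ENNReal.toReal_mono (ENNReal.add_ne_top.2 ⟨hμg, hκg⟩)
    (klDiv_map_compProd_prod_le μ κ hg hg' _ _)

theorem klTriple_compProd_le [StandardBorelSpace Z'] [StandardBorelSpace A']
    [StandardBorelSpace B'] (hμ : klDiv μ P ≠ ⊤) (hκ : ∫⁻ a, klDiv (κ a) P' ∂μ ≠ ⊤)
    {f : Z → A} {g : Z → B} (hf : Measurable f) (hg : Measurable g) {f' : Z' → A'}
    {g' : Z' → B'} (hf' : Measurable f') (hg' : Measurable g') :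
    klTriple (Prod.map f f') (Prod.map g g') (P.prod P') (μ ⊗ₘ κ) ≤
      klTriple f g P μ + ∫ a, klTriple f' g' P' (κ a) ∂μ := by
  have hint := integrable_klTriple hκ hf' hg'
  refine Prod.mk_le_mk.2 ⟨?_, Prod.mk_le_mk.2 ⟨?_, ?_⟩⟩
  · rw [fst_integral hint]
    exact toReal_klDiv_map_compProd_le hμ hκ hf hf'
  · rw [snd_integral hint, fst_integral hint.snd]
    exact toReal_klDiv_map_compProd_le hμ hκ hg hg'
  · rw [snd_integral hint, snd_integral hint.snd]
    simp only [klTriple, integral_neg, integral_toReal_klDiv hκ]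
    rw [klDiv_compProd_prod_eq_add, ENNReal.toReal_add hμ hκ, neg_add]

end CompProd

theorem klTriples_prod_subset [StandardBorelSpace Z'] [StandardBorelSpace A']
    [StandardBorelSpace B'] {P : Measure Z} [IsProbabilityMeasure P] {P' : Measure Z'}
    [IsProbabilityMeasure P'] {f : Z → A} {g : Z → B} (hf : Measurable f) (hg : Measurable g)
    {f' : Z' → A'} {g' : Z' → B'} (hf' : Measurable f') (hg' : Measurable g')
    {C : Set (ℝ × ℝ × ℝ)} (hC : Convex ℝ C) (hsub : klTriples f' g' P' ⊆ lowerClosure C) :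
    klTriples (Prod.map f f') (Prod.map g g') (P.prod P') ⊆
      lowerClosure (klTriples f g P + C) := by
  rintro _ ⟨Q, ⟨hQ_prob, hQ⟩, rfl⟩
  have : Nonempty Z' := nonempty_of_isProbabilityMeasure P'
  have hchain := klDiv_compProd_prod_eq_add Q.fst P Q.condKernel P'
  rw [Q.disintegrate] at hchain
  obtain ⟨hμ, hκ⟩ := ENNReal.add_ne_top.1 (hchain ▸ hQ)
  have hmeas : Measurable fun a ↦ klDiv (Q.condKernel a) P' := by
    simpa only [Kernel.const_apply] using measurable_klDiv_kernel Q.condKernel (Kernel.const Z P')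
  have hbary : ∫ a, klTriple f' g' P' (Q.condKernel a) ∂Q.fst ∈ (lowerClosure C : Set _) :=
    integral_mem_of_convex (convex_lowerClosure hC) (integrable_klTriple hκ hf' hg') <|
      (ae_lt_top hmeas hκ).mono fun a ha ↦ hsub ⟨_, ⟨inferInstance, ha.ne⟩, rfl⟩
  have hle := klTriple_compProd_le hμ hκ hf hg hf' hg'
  rw [Q.disintegrate] at hle
  rw [lowerClosure_add_distrib]
  exact LowerSet.lower _ hle <| Set.add_mem_add
    (subset_lowerClosure ⟨Q.fst, ⟨inferInstance, hμ⟩, rfl⟩) hbary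

theorem klTriples_pi_subset [StandardBorelSpace Z] [StandardBorelSpace A] [StandardBorelSpace B]
    {P : Measure Z} [IsProbabilityMeasure P] {f : Z → A} {g : Z → B} (hf : Measurable f)
    (hg : Measurable g) (n : ℕ) :
    klTriples (fun (z : Fin n → Z) i ↦ f (z i)) (fun (z : Fin n → Z) i ↦ g (z i))
        (Measure.pi fun _ ↦ P) ⊆
      lowerClosure ((n : ℝ) • convexHull ℝ (klTriples f g P)) := by
  have hhull : Convex ℝ (convexHull ℝ (klTriples f g P)) := convex_convexHull ℝ _
  induction n with
  | zero =>
    rintro _ ⟨Q, ⟨hQ, -⟩, rfl⟩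
    have hQP : Q = Measure.pi fun _ ↦ P := by
      refine Measure.ext fun s _ ↦ ?_
      rcases s.eq_empty_or_nonempty with rfl | hs
      · simp
      · rw [Subsingleton.eq_univ_of_nonempty hs, measure_univ, measure_univ]
    rw [hQP, klTriple_self, Nat.cast_zero, zero_smul_set
      ⟨0, subset_convexHull ℝ _ (zero_mem_klTriples f g P)⟩]
    exact subset_lowerClosure rfl
  | succ n ih =>
    rintro _ ⟨Q, ⟨hQ_prob, hQ⟩, rfl⟩
    let e := MeasurableEquiv.piFinSuccAbove (fun _ : Fin (n + 1) ↦ Z) 0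
    have he : (Measure.pi fun _ : Fin (n + 1) ↦ P).map e = P.prod (Measure.pi fun _ ↦ P) :=
      (measurePreserving_piFinSuccAbove (fun _ ↦ P) 0).map_eq
    have hfn : ∀ k, Measurable fun (z : Fin k → Z) i ↦ f (z i) := fun k ↦ by fun_prop
    have hgn : ∀ k, Measurable fun (z : Fin k → Z) i ↦ g (z i) := fun k ↦ by fun_prop
    rw [← klTriple_map_measurableEquiv e (MeasurableEquiv.piFinSuccAbove (fun _ ↦ A) 0)
      (MeasurableEquiv.piFinSuccAbove (fun _ ↦ B) 0) (hfn _) (hgn _) (hf.prodMap (hfn n))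
      (hg.prodMap (hgn n)) rfl rfl, he]
    have hmem := klTriples_prod_subset hf hg (hfn n) (hgn n) (hhull.smul (n : ℝ)) ih
      ⟨Q.map e, ⟨Measure.isProbabilityMeasure_map e.measurable.aemeasurable, by
        rwa [← he, klDiv_map_measurableEquiv]⟩, rfl⟩
    refine lowerClosure_mono ?_ hmem
    rw [Nat.cast_succ, hhull.add_smul n.cast_nonneg zero_le_one, one_smul, add_comm]
    exact Set.add_subset_add_left (subset_convexHull ℝ _)

end KlTriple

section Exponents

theorem elog_le_coe_iff {x : ℝ≥0∞} {y : ℝ} : elog x ≤ y ↔ x ≤ ENNReal.ofReal (Real.exp y) :=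
  ENNReal.logOrderIso.le_symm_apply.symm

theorem coe_le_elog_iff {x : ℝ≥0∞} {y : ℝ} : y ≤ elog x ↔ ENNReal.ofReal (Real.exp y) ≤ x :=
  ENNReal.logOrderIso.symm_apply_le.symm

variable {n : ℕ} {r : ℝ} {x : ℝ≥0∞}

theorem coe_le_neg_inv_mul_elog_iff (hn : n ≠ 0) :
    (r : EReal) ≤ -(((n : ℝ)⁻¹ : ℝ) * elog x) ↔ x ≤ ENNReal.ofReal (Real.exp (-(n * r))) := by
  have hn' : (0 : EReal) < (n : ℝ) := EReal.coe_pos.2 (Nat.cast_pos.2 hn.pos)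
  rw [EReal.le_neg, EReal.coe_inv, mul_comm, ← div_eq_mul_inv,
    EReal.div_le_iff_le_mul hn' (EReal.coe_ne_top _),
    ← EReal.coe_neg, ← EReal.coe_mul, elog_le_coe_iff, mul_neg]

theorem neg_inv_mul_elog_le_coe_iff (hn : n ≠ 0) :
    -(((n : ℝ)⁻¹ : ℝ) * elog x) ≤ (r : EReal) ↔ ENNReal.ofReal (Real.exp (-(n * r))) ≤ x := by
  have hn' : (0 : EReal) < (n : ℝ) := EReal.coe_pos.2 (Nat.cast_pos.2 hn.pos)
  rw [EReal.neg_le, EReal.coe_inv, mul_comm, ← div_eq_mul_inv,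
    EReal.le_div_iff_mul_le hn' (EReal.coe_ne_top _),
    ← EReal.coe_neg, ← EReal.coe_mul, coe_le_elog_iff, neg_mul, mul_comm]

variable {P : Measure (X × Y)} {α β : ℝ}

theorem coe_le_ThetaLn (hn : n ≠ 0) (h : ∀ A B, MeasurableSet A → MeasurableSet B →
      piM n (m1 P) A ≤ ENNReal.ofReal (Real.exp (-(n * α))) →
      piM n (m2 P) B ≤ ENNReal.ofReal (Real.exp (-(n * β))) →
      piM n P (prodSet A B) ≤ ENNReal.ofReal (Real.exp (-(n * r)))) :
    (r : EReal) ≤ ThetaLn P n α β :=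
  (coe_le_neg_inv_mul_elog_iff hn).2 <| iSup₂_le fun A B ↦ iSup₂_le fun hA hB ↦
    iSup₂_le fun hPA hPB ↦ h A B hA hB hPA hPB

theorem ThetaUn_le_coe (hn : n ≠ 0) (h : ∀ A B, MeasurableSet A → MeasurableSet B →
      ENNReal.ofReal (Real.exp (-(n * α))) ≤ piM n (m1 P) A →
      ENNReal.ofReal (Real.exp (-(n * β))) ≤ piM n (m2 P) B →
      ENNReal.ofReal (Real.exp (-(n * r))) ≤ piM n P (prodSet A B)) :
    ThetaUn P n α β ≤ r :=
  (neg_inv_mul_elog_le_coe_iff hn).2 <| le_iInf₂ fun A B ↦ le_iInf₂ fun hA hB ↦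
    le_iInf₂ fun hPA hPB ↦ h A B hA hB hPA hPB

end Exponents

section Coordinates

instance (P : Measure (X × Y)) [IsProbabilityMeasure P] : IsProbabilityMeasure (m1 P) :=
  Measure.isProbabilityMeasure_map measurable_fst.aemeasurable

instance (P : Measure (X × Y)) [IsProbabilityMeasure P] : IsProbabilityMeasure (m2 P) :=
  Measure.isProbabilityMeasure_map measurable_snd.aemeasurable

instance (n : ℕ) (P : Measure X) [IsProbabilityMeasure P] : IsProbabilityMeasure (piM n P) :=
  inferInstanceAs (IsProbabilityMeasure (Measure.pi fun _ ↦ P))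

variable {n : ℕ}

theorem measurable_fstv : Measurable (fstv : (Fin n → X × Y) → Fin n → X) := by
  unfold fstv
  fun_prop

theorem measurable_sndv : Measurable (sndv : (Fin n → X × Y) → Fin n → Y) := by
  unfold sndv
  fun_prop

theorem measurableSet_prodSet {A : Set (Fin n → X)} {B : Set (Fin n → Y)} (hA : MeasurableSet A)
    (hB : MeasurableSet B) : MeasurableSet (prodSet A B) :=
  (measurable_fstv hA).inter (measurable_sndv hB)

theorem map_fstv_piM (P : Measure (X × Y)) [IsProbabilityMeasure P] :
    (piM n P).map fstv = piM n (m1 P) := by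
  have : IsProbabilityMeasure (P.map Prod.fst) := inferInstanceAs (IsProbabilityMeasure (m1 P))
  exact Measure.pi_map_pi fun _ ↦ measurable_fst.aemeasurable

theorem map_sndv_piM (P : Measure (X × Y)) [IsProbabilityMeasure P] :
    (piM n P).map sndv = piM n (m2 P) := by
  have : IsProbabilityMeasure (P.map Prod.snd) := inferInstanceAs (IsProbabilityMeasure (m2 P))
  exact Measure.pi_map_pi fun _ ↦ measurable_snd.aemeasurable

end Coordinates

section LowerBound

variable {P : Measure (X × Y)} [IsProbabilityMeasure P]

theorem phiL_le_klDiv (Q : Measure (X × Y)) [IsProbabilityMeasure Q] (hQ : klDiv Q P ≠ ⊤) :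
    phiL P (klDiv (m1 Q) (m1 P)).toReal (klDiv (m2 Q) (m2 P)).toReal ≤ (klDiv Q P).toReal := by
  have h1 : klDiv (m1 Q) (m1 P) ≠ ⊤ := ne_top_of_le_ne_top hQ (klDiv_map_le Q P measurable_fst)
  have h2 : klDiv (m2 Q) (m2 P) ≠ ⊤ := ne_top_of_le_ne_top hQ (klDiv_map_le Q P measurable_snd)
  refine iInf₂_le_of_le (m1 Q) (m2 Q) <| iInf₂_le_of_le inferInstance inferInstance <|
    iInf₂_le_of_le (klDiv_ne_top_iff.1 h1).1 (klDiv_ne_top_iff.1 h2).1 <|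
    iInf₂_le_of_le (KL_eq_coe_toReal_klDiv h1) (KL_eq_coe_toReal_klDiv h2) <|
    iInf₂_le_of_le Q ⟨inferInstance, rfl, rfl⟩ (KL_eq_coe_toReal_klDiv hQ).le

theorem lce2_phiL_le_of_mem_convexHull_klTriples {w : ℝ × ℝ × ℝ}
    (hw : w ∈ convexHull ℝ (klTriples Prod.fst Prod.snd P)) :
    lce2 (phiL P) w.1 w.2.1 ≤ (-w.2.2 : ℝ) := by
  let flip : ℝ × ℝ × ℝ →ₗ[ℝ] ℝ × ℝ × ℝ := .prodMap .id (.prodMap .id (-.id))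
  have hsub : klTriples Prod.fst Prod.snd P ⊆ flip ⁻¹' convexHull ℝ (epigraph2 (phiL P)) := by
    rintro _ ⟨Q, ⟨hQ_prob, hQ⟩, rfl⟩
    refine subset_convexHull ℝ _ ⟨ENNReal.toReal_nonneg, ENNReal.toReal_nonneg, ?_⟩
    change phiL P _ _ ≤ ((- -(klDiv Q P).toReal : ℝ) : EReal)
    rw [neg_neg]
    exact phiL_le_klDiv Q hQ
  exact lce2_le_of_mem_convexHull_epigraph2
    (convexHull_min hsub ((convex_convexHull ℝ _).linear_preimage flip) hw)

theorem ThetaL_le_inv_mul_klDiv [StandardBorelSpace X] [StandardBorelSpace Y] {n : ℕ}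
    (hn : n ≠ 0) {α β : ℝ} (Q : Measure (Fin n → X × Y)) [hQ_prob : IsProbabilityMeasure Q]
    (hQ : klDiv Q (piM n P) ≠ ⊤)
    (hα : n * α ≤ (klDiv (Q.map fstv) (piM n (m1 P))).toReal)
    (hβ : n * β ≤ (klDiv (Q.map sndv) (piM n (m2 P))).toReal) :
    ThetaL P α β ≤ ((n : ℝ)⁻¹ * (klDiv Q (piM n P)).toReal : ℝ) := by
  have hn' : (0 : ℝ) < n := Nat.cast_pos.2 hn.pos
  obtain ⟨_, ⟨w, hw, rfl⟩, h1, h2, h3⟩ :=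
    klTriples_pi_subset measurable_fst measurable_snd n ⟨Q, ⟨hQ_prob, hQ⟩, rfl⟩
  rw [← map_fstv_piM] at hα
  rw [← map_sndv_piM] at hβ
  calc ThetaL P α β ≤ lce2 (phiL P) w.1 w.2.1 := iInf₂_le_of_le w.1 w.2.1 <|
        iInf₂_le_of_le (le_of_mul_le_mul_left (hα.trans h1) hn')
          (le_of_mul_le_mul_left (hβ.trans h2) hn') le_rfl
    _ ≤ (-w.2.2 : ℝ) := lce2_phiL_le_of_mem_convexHull_klTriples hw
    _ ≤ ((n : ℝ)⁻¹ * (klDiv Q (piM n P)).toReal : ℝ) := EReal.coe_le_coe_iff.2 <| by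
        rw [le_inv_mul_iff₀ hn', mul_neg]
        exact neg_le.1 h3

theorem le_toReal_klDiv_map {Z A : Type*} [MeasurableSpace Z] [MeasurableSpace A]
    {Q R : Measure Z} [IsProbabilityMeasure Q] [IsProbabilityMeasure R] (hQ : klDiv Q R ≠ ⊤)
    {f : Z → A} (hf : Measurable f) {S : Set A} (hS : MeasurableSet S)
    (hQS : ∀ᵐ z ∂Q, f z ∈ S) {a : ℝ} (ha : R.map f S ≤ ENNReal.ofReal (Real.exp (-a))) :
    a ≤ (klDiv (Q.map f) (R.map f)).toReal := by
  have := Measure.isProbabilityMeasure_map (μ := Q) hf.aemeasurable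
  have := Measure.isProbabilityMeasure_map (μ := R) hf.aemeasurable
  have h := ofReal_exp_neg_klDiv_le_measure (ne_top_of_le_ne_top hQ (klDiv_map_le Q R hf)) hS
    ((ae_map_iff hf.aemeasurable hS).2 hQS)
  exact neg_le_neg_iff.1 <| Real.exp_le_exp.1 <|
    (ENNReal.ofReal_le_ofReal_iff (Real.exp_pos _).le).1 (h.trans ha)

theorem ThetaL_le_ThetaLn [StandardBorelSpace X] [StandardBorelSpace Y] {n : ℕ} (hn : n ≠ 0)
    (α β : ℝ) : ThetaL P α β ≤ ThetaLn P n α β := by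
  refine EReal.ge_of_forall_gt_iff_ge.1 fun r hr ↦
    coe_le_ThetaLn hn fun A B hA hB hPA hPB ↦ ?_
  have hS := measurableSet_prodSet hA hB
  rcases eq_or_ne (piM n P (prodSet A B)) 0 with h0 | h0
  · simp [h0]
  have hQ_prob := cond_isProbabilityMeasure h0
  obtain ⟨hQ, hQ_eq⟩ := klDiv_cond_ne_top_and_toReal_eq hS h0
  have hQS := ae_cond_mem (μ := piM n P) hS
  have hα := le_toReal_klDiv_map hQ measurable_fstv hA (hQS.mono fun z hz ↦ hz.1)
    (by rwa [map_fstv_piM])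
  have hβ := le_toReal_klDiv_map hQ measurable_sndv hB (hQS.mono fun z hz ↦ hz.2)
    (by rwa [map_sndv_piM])
  rw [map_fstv_piM] at hα
  rw [map_sndv_piM] at hβ
  have hr' := EReal.coe_lt_coe_iff.1 (hr.trans_le (ThetaL_le_inv_mul_klDiv hn _ hQ hα hβ))
  rw [hQ_eq, lt_inv_mul_iff₀ (Nat.cast_pos.2 hn.pos), lt_neg] at hr'
  rw [ENNReal.le_ofReal_iff_toReal_le (measure_ne_top _ _) (Real.exp_pos _).le]
  exact (Real.log_le_iff_le_exp (ENNReal.toReal_pos h0 (measure_ne_top _ _))).1 hr'.le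

end LowerBound

section ReverseBrascampLieb

variable {Z Z' A A' B B' : Type*} [MeasurableSpace Z] [MeasurableSpace Z'] [MeasurableSpace A]
  [MeasurableSpace A'] [MeasurableSpace B] [MeasurableSpace B']

/-- The reverse Brascamp–Lieb inequality with exponents `u`, `v` and constant `exp (-c)` for two
observables `f`, `g` of a random point with law `P`, tested on functions with values in `[0, 1]`. -/
def ReverseBrascampLieb (f : Z → A) (g : Z → B) (P : Measure Z) (c u v : ℝ) : Prop :=
  ∀ ⦃φ : A → ℝ≥0∞⦄ ⦃ψ : B → ℝ≥0∞⦄, Measurable φ → Measurable ψ →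
    (∀ a, φ a ≤ 1) → (∀ b, ψ b ≤ 1) →
    ENNReal.ofReal (Real.exp (-c)) * ((∫⁻ z, φ (f z) ∂P) ^ u * (∫⁻ z, ψ (g z) ∂P) ^ v) ≤
      ∫⁻ z, φ (f z) ^ u * ψ (g z) ^ v ∂P

namespace ReverseBrascampLieb

variable {f : Z → A} {g : Z → B} {P : Measure Z} {c u v : ℝ}

theorem comp_measurePreserving {T : Z' → Z} {P' : Measure Z'} (h : ReverseBrascampLieb f g P c u v)
    (hf : Measurable f) (hg : Measurable g) (hT : MeasurePreserving T P' P) :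
    ReverseBrascampLieb (f ∘ T) (g ∘ T) P' c u v := fun φ ψ hφ hψ hφ_le hψ_le ↦ by
  simp only [Function.comp_apply]
  rw [hT.lintegral_comp (f := fun z ↦ φ (f z)) (by fun_prop),
    hT.lintegral_comp (f := fun z ↦ ψ (g z)) (by fun_prop),
    hT.lintegral_comp (f := fun z ↦ φ (f z) ^ u * ψ (g z) ^ v) (by fun_prop)]
  exact h hφ hψ hφ_le hψ_le

theorem measurable_comp {σ : A → A'} {τ : B → B'} (h : ReverseBrascampLieb f g P c u v)
    (hσ : Measurable σ) (hτ : Measurable τ) : ReverseBrascampLieb (σ ∘ f) (τ ∘ g) P c u v :=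
  fun _ _ hφ hψ hφ_le hψ_le ↦
    h (hφ.comp hσ) (hψ.comp hτ) (fun a ↦ hφ_le (σ a)) fun b ↦ hψ_le (τ b)

theorem of_unique [Unique Z] [IsProbabilityMeasure P] : ReverseBrascampLieb f g P 0 u v :=
  fun φ ψ _ _ _ _ ↦ by simp [lintegral_unique]

theorem prod {P' : Measure Z'} [IsProbabilityMeasure P'] {f' : Z' → A'} {g' : Z' → B'} {c' : ℝ}
    (h : ReverseBrascampLieb f g P c u v)
    (h' : ReverseBrascampLieb f' g' P' c' u v) (hf : Measurable f) (hg : Measurable g)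
    (hf' : Measurable f') (hg' : Measurable g') :
    ReverseBrascampLieb (Prod.map f f') (Prod.map g g') (P.prod P') (c + c') u v := by
  intro φ ψ hφ hψ hφ_le hψ_le
  set Φ : A → ℝ≥0∞ := fun a ↦ ∫⁻ z', φ (a, f' z') ∂P'
  set Ψ : B → ℝ≥0∞ := fun b ↦ ∫⁻ z', ψ (b, g' z') ∂P'
  have hΦ : Measurable Φ :=
    Measurable.lintegral_prod_right' (f := fun p : A × Z' ↦ φ (p.1, f' p.2)) (by fun_prop)
  have hΨ : Measurable Ψ :=
    Measurable.lintegral_prod_right' (f := fun p : B × Z' ↦ ψ (p.1, g' p.2)) (by fun_prop)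
  have hΦ_le (a : A) : Φ a ≤ 1 := (lintegral_mono fun z' ↦ hφ_le (a, f' z')).trans (by simp)
  have hΨ_le (b : B) : Ψ b ≤ 1 := (lintegral_mono fun z' ↦ hψ_le (b, g' z')).trans (by simp)
  have hsection (z : Z) : ENNReal.ofReal (Real.exp (-c')) * (Φ (f z) ^ u * Ψ (g z) ^ v) ≤
      ∫⁻ z', φ (f z, f' z') ^ u * ψ (g z, g' z') ^ v ∂P' :=
    h' (hφ.comp measurable_prodMk_left) (hψ.comp measurable_prodMk_left)
      (fun a ↦ hφ_le (f z, a)) fun b ↦ hψ_le (g z, b)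
  simp only [Prod.map]
  rw [lintegral_prod (fun p : Z × Z' ↦ φ (f p.1, f' p.2)) (by fun_prop),
    lintegral_prod (fun p : Z × Z' ↦ ψ (g p.1, g' p.2)) (by fun_prop),
    lintegral_prod (fun p : Z × Z' ↦ φ (f p.1, f' p.2) ^ u * ψ (g p.1, g' p.2) ^ v) (by fun_prop)]
  calc ENNReal.ofReal (Real.exp (-(c + c'))) *
        ((∫⁻ z, Φ (f z) ∂P) ^ u * (∫⁻ z, Ψ (g z) ∂P) ^ v)
      = ENNReal.ofReal (Real.exp (-c')) * (ENNReal.ofReal (Real.exp (-c)) *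
          ((∫⁻ z, Φ (f z) ∂P) ^ u * (∫⁻ z, Ψ (g z) ∂P) ^ v)) := by
        rw [neg_add_rev, Real.exp_add, ENNReal.ofReal_mul (Real.exp_pos _).le, mul_assoc]
    _ ≤ ENNReal.ofReal (Real.exp (-c')) * ∫⁻ z, Φ (f z) ^ u * Ψ (g z) ^ v ∂P := by
        gcongr
        exact h hΦ hΨ hΦ_le hΨ_le
    _ = ∫⁻ z, ENNReal.ofReal (Real.exp (-c')) * (Φ (f z) ^ u * Ψ (g z) ^ v) ∂P :=
        (lintegral_const_mul _ (((hΦ.comp hf).pow_const u).mul ((hΨ.comp hg).pow_const v))).symm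
    _ ≤ ∫⁻ z, ∫⁻ z', φ (f z, f' z') ^ u * ψ (g z, g' z') ^ v ∂P' ∂P := lintegral_mono hsection

theorem pi [IsProbabilityMeasure P] (h : ReverseBrascampLieb f g P c u v) (hf : Measurable f)
    (hg : Measurable g) (n : ℕ) :
    ReverseBrascampLieb (fun (z : Fin n → Z) i ↦ f (z i)) (fun (z : Fin n → Z) i ↦ g (z i))
      (Measure.pi fun _ ↦ P) (n * c) u v := by
  induction n with
  | zero =>
    rw [Nat.cast_zero, zero_mul]
    exact of_unique
  | succ n ih =>
    have hfn : Measurable fun (z : Fin n → Z) i ↦ f (z i) := by fun_prop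
    have hgn : Measurable fun (z : Fin n → Z) i ↦ g (z i) := by fun_prop
    have hsplit := ((h.prod ih hf hg hfn hgn).comp_measurePreserving (hf.prodMap hfn)
      (hg.prodMap hgn) (measurePreserving_piFinSuccAbove (fun _ ↦ P) 0)).measurable_comp
        (MeasurableEquiv.piFinSuccAbove (fun _ ↦ A) 0).symm.measurable
        (MeasurableEquiv.piFinSuccAbove (fun _ ↦ B) 0).symm.measurable
    rw [Nat.cast_succ, add_one_mul, add_comm (n * c)]
    convert hsplit using 1
    · exact funext fun _ ↦ ((MeasurableEquiv.piFinSuccAbove _ 0).symm_apply_apply _).symm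
    · exact funext fun _ ↦ ((MeasurableEquiv.piFinSuccAbove _ 0).symm_apply_apply _).symm

theorem le_measure_inter_preimage (h : ReverseBrascampLieb f g P c u v) (hf : Measurable f)
    (hg : Measurable g) (hu : 0 < u) (hv : 0 < v) {S : Set A} {T : Set B} (hS : MeasurableSet S)
    (hT : MeasurableSet T) :
    ENNReal.ofReal (Real.exp (-c)) * (P.map f S ^ u * P.map g T ^ v) ≤ P (f ⁻¹' S ∩ g ⁻¹' T) := by
  have hind := h (measurable_one.indicator hS) (measurable_one.indicator hT)
    (indicator_le_self' fun _ _ ↦ zero_le_one) (indicator_le_self' fun _ _ ↦ zero_le_one)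
  have hprod : ∀ z, S.indicator (1 : A → ℝ≥0∞) (f z) ^ u * T.indicator (1 : B → ℝ≥0∞) (g z) ^ v =
      (f ⁻¹' S ∩ g ⁻¹' T).indicator 1 z := fun z ↦ by
    by_cases hzS : f z ∈ S <;> by_cases hzT : g z ∈ T <;> simp [hzS, hzT, hu, hv]
  simp only [hprod] at hind
  rwa [lintegral_indicator_one ((hf hS).inter (hg hT)),
    ← lintegral_map (measurable_one.indicator hS) hf, lintegral_indicator_one hS,
    ← lintegral_map (measurable_one.indicator hT) hg, lintegral_indicator_one hT] at hind

end ReverseBrascampLieb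

end ReverseBrascampLieb

section UpperBound

theorem ofReal_exp_mul_log_toReal {t : ℝ≥0∞} (h0 : t ≠ 0) (htop : t ≠ ⊤) (u : ℝ) :
    ENNReal.ofReal (Real.exp (u * Real.log t.toReal)) = t ^ u := by
  have hpos := ENNReal.toReal_pos h0 htop
  rw [mul_comm, ← Real.rpow_def_of_pos hpos, ← ENNReal.ofReal_rpow_of_pos hpos,
    ENNReal.ofReal_toReal htop]

variable {P : Measure (X × Y)} [IsProbabilityMeasure P] {c u v : ℝ}

theorem ofReal_exp_integral_log_sub_klDiv_le_lintegral {φ : X → ℝ≥0∞} {ψ : Y → ℝ≥0∞}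
    (hφ : Measurable φ) (hψ : Measurable ψ) (hφ_le : ∀ x, φ x ≤ 1) (hψ_le : ∀ y, ψ y ≤ 1)
    {π : Measure (X × Y)} [IsProbabilityMeasure π] (hπ : klDiv π P ≠ ⊤)
    (hφ0 : ∀ᵐ x ∂m1 π, φ x ≠ 0) (hψ0 : ∀ᵐ y ∂m2 π, ψ y ≠ 0)
    (hφ_int : Integrable (fun x ↦ Real.log (φ x).toReal) (m1 π))
    (hψ_int : Integrable (fun y ↦ Real.log (ψ y).toReal) (m2 π)) (u v : ℝ) :
    ENNReal.ofReal (Real.exp (u * ∫ x, Real.log (φ x).toReal ∂m1 π +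
        v * ∫ y, Real.log (ψ y).toReal ∂m2 π - (klDiv π P).toReal)) ≤
      ∫⁻ z, φ z.1 ^ u * ψ z.2 ^ v ∂P := by
  have hint1 : Integrable (fun z ↦ u * Real.log (φ z.1).toReal) π :=
    (hφ_int.comp_measurable measurable_fst).const_mul u
  have hint2 : Integrable (fun z ↦ v * Real.log (ψ z.2).toReal) π :=
    (hψ_int.comp_measurable measurable_snd).const_mul v
  have heq : u * ∫ x, Real.log (φ x).toReal ∂m1 π + v * ∫ y, Real.log (ψ y).toReal ∂m2 π =
      ∫ z, u * Real.log (φ z.1).toReal + v * Real.log (ψ z.2).toReal ∂π := by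
    rw [integral_add hint1 hint2, integral_const_mul, integral_const_mul, m1, m2,
      integral_map measurable_fst.aemeasurable hφ_int.aestronglyMeasurable,
      integral_map measurable_snd.aemeasurable hψ_int.aestronglyMeasurable]
  rw [heq]
  refine ofReal_exp_integral_sub_klDiv_le_lintegral hπ (hint1.add hint2) (by fun_prop) ?_
  filter_upwards [ae_of_ae_map measurable_fst.aemeasurable hφ0,
    ae_of_ae_map measurable_snd.aemeasurable hψ0] with z hz1 hz2
  rw [Pi.add_apply, Real.exp_add, ENNReal.ofReal_mul (Real.exp_pos _).le,
    ofReal_exp_mul_log_toReal hz1 ((hφ_le _).trans_lt ENNReal.one_lt_top).ne,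
    ofReal_exp_mul_log_toReal hz2 ((hψ_le _).trans_lt ENNReal.one_lt_top).ne]

theorem exists_coupling_of_Dmin_lt {QX : Measure X} {QY : Measure Y} {r : ℝ}
    (h : Dmin QX QY P < r) :
    ∃ π : Measure (X × Y), IsProbabilityMeasure π ∧ m1 π = QX ∧ m2 π = QY ∧
      klDiv π P ≠ ⊤ ∧ (klDiv π P).toReal < r := by
  obtain ⟨π, ⟨hπ, hπX, hπY⟩, hr⟩ := by simpa only [Dmin, iInf_lt_iff, exists_prop] using h
  have hne : klDiv π P ≠ ⊤ := fun htop ↦ by simp [KL_eq_klDiv, htop] at hr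
  rw [KL_eq_coe_toReal_klDiv hne, EReal.coe_lt_coe_iff] at hr
  exact ⟨π, hπ, hπX, hπY, hne, hr⟩

theorem reverseBrascampLieb_of_Dmin_le (hu : 0 < u) (hv : 0 < v)
    (h : ∀ (QX : Measure X) (QY : Measure Y) [IsProbabilityMeasure QX] [IsProbabilityMeasure QY],
      klDiv QX (m1 P) ≠ ⊤ → klDiv QY (m2 P) ≠ ⊤ →
      Dmin QX QY P ≤
        (c + u * (klDiv QX (m1 P)).toReal + v * (klDiv QY (m2 P)).toReal : ℝ)) :
    ReverseBrascampLieb Prod.fst Prod.snd P c u v := by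
  intro φ ψ hφ hψ hφ_le hψ_le
  rw [← lintegral_map hφ measurable_fst, ← lintegral_map hψ measurable_snd, ← m1, ← m2]
  set a := ∫⁻ x, φ x ∂m1 P
  set b := ∫⁻ y, ψ y ∂m2 P
  rcases eq_or_ne a 0 with ha0 | ha0
  · simp [ha0, hu]
  rcases eq_or_ne b 0 with hb0 | hb0
  · simp [hb0, hv]
  have ha_top : a ≠ ⊤ := ((lintegral_mono hφ_le).trans_lt (by simp)).ne
  have hb_top : b ≠ ⊤ := ((lintegral_mono hψ_le).trans_lt (by simp)).ne
  rw [← ofReal_exp_mul_log_toReal ha0 ha_top, ← ofReal_exp_mul_log_toReal hb0 hb_top,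
    ← ENNReal.ofReal_mul (Real.exp_pos _).le, ← ENNReal.ofReal_mul (Real.exp_pos _).le,
    ← Real.exp_add, ← Real.exp_add, ← coe_le_elog_iff]
  refine EReal.ge_of_forall_gt_iff_ge.1 fun r hr ↦ coe_le_elog_iff.2 ?_
  have := isProbabilityMeasure_reweight hφ ha0 ha_top
  have := isProbabilityMeasure_reweight hψ hb0 hb_top
  obtain ⟨hX, hX_log⟩ := klDiv_reweight_ne_top_and_integral_log_eq hφ hφ_le ha0
  obtain ⟨hY, hY_log⟩ := klDiv_reweight_ne_top_and_integral_log_eq hψ hψ_le hb0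
  have hDmin := (h _ _ hX hY).trans_lt
    (EReal.coe_lt_coe_iff.2 (lt_add_of_pos_right _ (sub_pos.2 (EReal.coe_lt_coe_iff.1 hr))))
  obtain ⟨π, hπ_prob, hπX, hπY, hπ, hπ_lt⟩ := exists_coupling_of_Dmin_lt hDmin
  refine le_trans (ENNReal.ofReal_le_ofReal (Real.exp_le_exp.2 ?_))
    (ofReal_exp_integral_log_sub_klDiv_le_lintegral hφ hψ hφ_le hψ_le hπ
      (hπX ▸ ae_ne_zero_reweight hφ) (hπY ▸ ae_ne_zero_reweight hψ)
      (hπX ▸ integrable_log_reweight hφ hφ_le ha0) (hπY ▸ integrable_log_reweight hψ hψ_le hb0) u v)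
  rw [hπX, hπY, hX_log, hY_log]
  linarith

theorem Dmin_le_phiU {QX : Measure X} {QY : Measure Y} [IsProbabilityMeasure QX]
    [IsProbabilityMeasure QY] (hX : klDiv QX (m1 P) ≠ ⊤) (hY : klDiv QY (m2 P) ≠ ⊤) :
    Dmin QX QY P ≤ phiU P (klDiv QX (m1 P)).toReal (klDiv QY (m2 P)).toReal :=
  le_iSup₂_of_le QX QY <| le_iSup₂_of_le inferInstance inferInstance <|
    le_iSup₂_of_le (klDiv_ne_top_iff.1 hX).1 (klDiv_ne_top_iff.1 hY).1 <|
    le_iSup₂_of_le (KL_eq_coe_toReal_klDiv hX) (KL_eq_coe_toReal_klDiv hY) le_rfl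

theorem phiU_zero_zero_ne_bot : phiU P 0 0 ≠ ⊥ := by
  have h := Dmin_le_phiU (P := P) (QX := m1 P) (QY := m2 P) (by simp) (by simp)
  rw [klDiv_self, klDiv_self, ENNReal.toReal_zero] at h
  refine ((EReal.bot_lt_zero.trans_le (le_iInf₂ fun π hπ ↦ ?_)).trans_le h).ne'
  have := hπ.1
  exact KL_eq_klDiv π P ▸ EReal.coe_ennreal_nonneg _

theorem le_piM_prodSet_of_reverseBrascampLieb
    (h : ReverseBrascampLieb Prod.fst Prod.snd P c u v) (hu : 0 < u) (hv : 0 < v) {n : ℕ}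
    {A : Set (Fin n → X)} {B : Set (Fin n → Y)} (hA : MeasurableSet A) (hB : MeasurableSet B)
    {α β : ℝ} (hPA : ENNReal.ofReal (Real.exp (-(n * α))) ≤ piM n (m1 P) A)
    (hPB : ENNReal.ofReal (Real.exp (-(n * β))) ≤ piM n (m2 P) B) :
    ENNReal.ofReal (Real.exp (-(n * (c + u * α + v * β)))) ≤ piM n P (prodSet A B) := by
  rw [← map_fstv_piM] at hPA
  rw [← map_sndv_piM] at hPB
  calc ENNReal.ofReal (Real.exp (-(n * (c + u * α + v * β))))
      = ENNReal.ofReal (Real.exp (-(n * c))) * (ENNReal.ofReal (Real.exp (-(n * α))) ^ u *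
          ENNReal.ofReal (Real.exp (-(n * β))) ^ v) := by
        rw [ENNReal.ofReal_rpow_of_pos (Real.exp_pos _),
          ENNReal.ofReal_rpow_of_pos (Real.exp_pos _), ← ENNReal.ofReal_mul (by positivity),
          ← ENNReal.ofReal_mul (by positivity), ← Real.exp_mul, ← Real.exp_mul, ← Real.exp_add,
          ← Real.exp_add]
        ring_nf
    _ ≤ ENNReal.ofReal (Real.exp (-(n * c))) *
          ((piM n P).map fstv A ^ u * (piM n P).map sndv B ^ v) := by gcongr
    _ ≤ piM n P (prodSet A B) :=
        (h.pi measurable_fst measurable_snd n).le_measure_inter_preimage measurable_fstv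
          measurable_sndv hu hv hA hB

theorem ThetaUn_le_ThetaU {n : ℕ} (hn : n ≠ 0) {α β : ℝ} (hα : 0 < α) (hβ : 0 < β) :
    ThetaUn P n α β ≤ ThetaU P α β := by
  refine EReal.le_of_forall_lt_iff_le.1 fun θ hθ ↦ EReal.le_of_forall_lt_iff_le.1 fun η hη ↦ ?_
  have huce (s t : ℝ) (hs : 0 ≤ s) (hsα : s ≤ α) (ht : 0 ≤ t) (htβ : t ≤ β) :
      uce2 (phiU P) s t ≤ θ := by
    refine le_trans ?_ hθ.le
    exact le_iSup₂_of_le s t <| le_iSup₂_of_le hs hsα <| le_iSup₂_of_le ht htβ le_rfl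
  obtain ⟨u, v, hu, hv, hsuper⟩ := exists_pos_supergradient_of_uce2_le phiU_zero_zero_ne_bot
    hα hβ huce (EReal.coe_lt_coe_iff.1 hη)
  have hRBL : ReverseBrascampLieb Prod.fst Prod.snd P (η - u * α - v * β) u v :=
    reverseBrascampLieb_of_Dmin_le hu hv fun QX QY _ _ hX hY ↦ by
      convert (Dmin_le_phiU hX hY).trans (hsuper _ _ ENNReal.toReal_nonneg ENNReal.toReal_nonneg)
        using 2
      ring
  refine ThetaUn_le_coe hn fun A B hA hB hPA hPB ↦ ?_
  convert le_piM_prodSet_of_reverseBrascampLieb hRBL hu hv hA hB hPA hPB using 5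
  ring

theorem ThetaUn_zero_right_le {n : ℕ} (hn : n ≠ 0) (α : ℝ) : ThetaUn P n α 0 ≤ α := by
  refine ThetaUn_le_coe hn fun A B hA hB hPA hPB ↦ hPA.trans ?_
  rw [mul_zero, neg_zero, Real.exp_zero, ENNReal.ofReal_one, ← map_sndv_piM,
    Measure.map_apply measurable_sndv hB] at hPB
  have hB_ae : ∀ᵐ z ∂piM n P, sndv z ∈ B :=
    (prob_compl_eq_zero_iff (measurable_sndv hB)).2 (prob_le_one.antisymm hPB)
  rw [← map_fstv_piM, Measure.map_apply measurable_fstv hA]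
  exact measure_mono_ae (hB_ae.mono fun z hzB hzA ↦ ⟨hzA, hzB⟩)

theorem ThetaUn_zero_left_le {n : ℕ} (hn : n ≠ 0) (β : ℝ) : ThetaUn P n 0 β ≤ β := by
  refine ThetaUn_le_coe hn fun A B hA hB hPA hPB ↦ hPB.trans ?_
  rw [mul_zero, neg_zero, Real.exp_zero, ENNReal.ofReal_one, ← map_fstv_piM,
    Measure.map_apply measurable_fstv hA] at hPA
  have hA_ae : ∀ᵐ z ∂piM n P, fstv z ∈ A :=
    (prob_compl_eq_zero_iff (measurable_fstv hA)).2 (prob_le_one.antisymm hPA)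
  rw [← map_sndv_piM, Measure.map_apply measurable_sndv hB]
  exact measure_mono_ae (hA_ae.mono fun z hzA hzB ↦ ⟨hzA, hzB⟩)

end UpperBound

theorem statement9_general [StandardBorelSpace X] [StandardBorelSpace Y]
    (P : Measure (X × Y)) [IsProbabilityMeasure P] (n : ℕ) (hn : 1 ≤ n) (α β : ℝ) :
    (ThetaL P α β ≤ ThetaLn P n α β) ∧
    (0 < α → 0 < β → ThetaUn P n α β ≤ ThetaU P α β) ∧
    (ThetaUn P n α 0 ≤ (α : EReal)) ∧
    (ThetaUn P n 0 β ≤ (β : EReal)) := by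
  have hn0 : n ≠ 0 := Nat.one_le_iff_ne_zero.1 hn
  exact ⟨ThetaL_le_ThetaLn hn0 α β, ThetaUn_le_ThetaU hn0, ThetaUn_zero_right_le hn0 α,
    ThetaUn_zero_left_le hn0 β⟩

/-- Strong small-set expansion theorem, inequalities;
Theorem `thm:strongsse`. -/
theorem statement9 [TopologicalSpace X] [PolishSpace X] [BorelSpace X]
    [TopologicalSpace Y] [PolishSpace Y] [BorelSpace Y]
    (P : Measure (X × Y)) [IsProbabilityMeasure P]
    (hndX : ∀ x : X, m1 P ≠ Measure.dirac x) (hndY : ∀ y : Y, m2 P ≠ Measure.dirac y)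
    (n : ℕ) (hn : 1 ≤ n)
    (α β : ℝ) (hα0 : 0 ≤ α) (hαmax : (α : EReal) ≤ alphaMax (m1 P))
    (hβ0 : 0 ≤ β) (hβmax : (β : EReal) ≤ alphaMax (m2 P)) :
    (ThetaL P α β ≤ ThetaLn P n α β) ∧
    (0 < α → 0 < β → ThetaUn P n α β ≤ ThetaU P α β) ∧
    (ThetaUn P n α 0 ≤ (α : EReal)) ∧
    (ThetaUn P n 0 β ≤ (β : EReal)) :=
  statement9_general P n hn α β

end BL
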